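/- arXiv:2504.06773 — 3 statements merged into one kernel-verified Lean document; each statement's English description precedes it below -/
import Mathlib

section
/- Let λ∈(0,1) and let S:ℝ^d×ℝ^d→ℝ be a C² function with S(x+m,X+m)=S(x,X) for all m∈ℤ^d, such that for all (x,X) the matrices ∂²S/∂x²(x,X) and ∂²S/∂X²(x,X) are positive definite and ∂²S/∂x∂X(x,X) is negative definite, and S(x,X)/‖x−X‖ → +∞ as ‖x−X‖→∞. Let F:ℝ^{2d}→ℝ^{2d} be a C¹ diffeomorphism with F(x+m,y)=F(x,y)+(m,0) for all m∈ℤ^d, generated by S (i.e. writing F(x,y)=(X,Y): λy=−(∂S/∂x)(x,X) and Y=(∂S/∂X)(x,X)). Suppose F admits a C⁰-invariant Lagrangian graph L={(x,Ψ(x))} with Ψ=c+Dη (c∈ℝ^d, η C¹ ℤ^d-periodic), and let g:ℝ^d→ℝ^d be the homeomorphism with F(x,Ψ(x))=(g(x),Ψ(g(x))) for all x. Then g is bi-Lipschitz: both g and g⁻¹ are Lipschitz continuous on ℝ^d. -/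
noncomputable section

open Real

/-- The gradient of `f : ℝ^d → ℝ`, as a vector in `ℝ^d`. -/
def gradVec {d : ℕ} (f : (Fin d → ℝ) → ℝ) (x : Fin d → ℝ) : Fin d → ℝ :=
  fun i => fderiv ℝ f x (Pi.single i 1)

/-- `f` is `ℤ^d`-periodic. -/
def ZdPeriodic {d : ℕ} (f : (Fin d → ℝ) → ℝ) : Prop :=
  ∀ (x : Fin d → ℝ) (m : Fin d → ℤ), f (x + fun i => (m i : ℝ)) = f x

/-- Partial gradient of `S` in the first `ℝ^d`-variable. -/
def grad1 {d : ℕ} (S : (Fin d → ℝ) → (Fin d → ℝ) → ℝ) (x X : Fin d → ℝ) : Fin d → ℝ :=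
  fun i => fderiv ℝ (fun x' => S x' X) x (Pi.single i 1)

/-- Partial gradient of `S` in the second `ℝ^d`-variable. -/
def grad2 {d : ℕ} (S : (Fin d → ℝ) → (Fin d → ℝ) → ℝ) (x X : Fin d → ℝ) : Fin d → ℝ :=
  fun i => fderiv ℝ (fun X' => S x X') X (Pi.single i 1)

/-- The Hessian block `∂²S/∂x²(x,X)`. -/
def hessXX {d : ℕ} (S : (Fin d → ℝ) → (Fin d → ℝ) → ℝ) (x X : Fin d → ℝ) :
    Matrix (Fin d) (Fin d) ℝ :=
  Matrix.of fun i j => fderiv ℝ (fun x' => grad1 S x' X j) x (Pi.single i 1)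

/-- The Hessian block `∂²S/∂X²(x,X)`. -/
def hessYY {d : ℕ} (S : (Fin d → ℝ) → (Fin d → ℝ) → ℝ) (x X : Fin d → ℝ) :
    Matrix (Fin d) (Fin d) ℝ :=
  Matrix.of fun i j => fderiv ℝ (fun X' => grad2 S x X' j) X (Pi.single i 1)

/-- The mixed Hessian block `∂²S/∂x∂X(x,X)`. -/
def hessXY {d : ℕ} (S : (Fin d → ℝ) → (Fin d → ℝ) → ℝ) (x X : Fin d → ℝ) :
    Matrix (Fin d) (Fin d) ℝ :=
  Matrix.of fun i j => fderiv ℝ (fun x' => grad2 S x' X j) x (Pi.single i 1)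

/-!
Let `u` be a primitive of `Ψ`, so that the invariant graph is the graph of `Du`, and fix a point
`a`. The generating relations say that `lam • u + S(·, g a)` and `S(g⁻¹ a, ·) - u` are critical
at `a`. Both functions are coercive, and by the twist condition each has a single critical point,
so `a` minimizes both. Since `S` is `C²`, `u` is then locally semiconvex and semiconcave, which
makes `Du` locally Lipschitz. Consequently `g` and `g⁻¹`, the first components of `F` and its
inverse along the graph, are locally Lipschitz, and equivariance under integer translations makes
the local constants uniform.
-/

open Asymptotics Bornology Filter Function Metric Set Topology

section Remainder

variable {E F : Type*} [NormedAddCommGroup E] [NormedSpace ℝ E]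
  [NormedAddCommGroup F] [NormedSpace ℝ F]

/-- The remainder at `z` of the first-order Taylor expansion of `f` at `x`. Two-sided quadratic
bounds on it encode semiconcavity together with semiconvexity. -/
def firstOrderRemainder (f : E → F) (x z : E) : F :=
  f z - f x - fderiv ℝ f x (z - x)

theorem isBigO_firstOrderRemainder {f : E → F} {a : E} (hf : ContDiffAt ℝ 2 f a) :
    (fun p : E × E => firstOrderRemainder f p.1 p.2) =O[𝓝 (a, a)] fun p => ‖p.2 - p.1‖ ^ 2 := by
  obtain ⟨K, t, ht, hK⟩ := (hf.fderiv_right (m := 1) (by norm_num)).exists_lipschitzOnWith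
  have hdiff : ∀ᶠ x in 𝓝 a, DifferentiableAt ℝ f x :=
    (hf.eventually (by simp)).mono fun x hx => hx.differentiableAt two_ne_zero
  obtain ⟨r, hr, hball⟩ := Metric.eventually_nhds_iff_ball.1 (hdiff.and ht)
  refine .of_bound K ?_
  filter_upwards [prod_mem_nhds (ball_mem_nhds a hr) (ball_mem_nhds a hr)]
  rintro ⟨x, z⟩ ⟨hx, hz⟩
  have hseg : segment ℝ x z ⊆ ball a r := (convex_ball a r).segment_subset hx hz
  have hderiv : ∀ y ∈ segment ℝ x z, ‖fderiv ℝ f y - fderiv ℝ f x‖ ≤ K * ‖z - x‖ := by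
    intro y hy
    refine (hK.norm_sub_le (hball y (hseg hy)).2 (hball x hx).2).trans ?_
    gcongr
    exact norm_sub_le_of_mem_segment hy
  calc ‖firstOrderRemainder f x z‖ ≤ K * ‖z - x‖ * ‖z - x‖ :=
        (convex_segment x z).norm_image_sub_le_of_norm_fderiv_le'
          (fun y hy => (hball y (hseg hy)).1) hderiv (left_mem_segment ℝ x z)
          (right_mem_segment ℝ x z)
    _ = K * ‖‖z - x‖ ^ 2‖ := by rw [norm_pow, norm_norm, sq, mul_assoc]

theorem fderiv_sub_fderiv_apply (f : E → F) (x y w : E) :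
    (fderiv ℝ f y - fderiv ℝ f x) w = firstOrderRemainder f x (y + w) -
      firstOrderRemainder f y (y + w) - firstOrderRemainder f x y := by
  have hsplit : y + w - x = (y - x) + w := by abel
  simp only [firstOrderRemainder, hsplit, add_sub_cancel_left, map_add, sub_apply]
  abel

theorem norm_fderiv_sub_fderiv_apply_le {f : E → F} {x y w : E} {C : ℝ} (hC : 0 ≤ C)
    (hw : ‖w‖ = ‖y - x‖) (hxw : ‖firstOrderRemainder f x (y + w)‖ ≤ C * ‖y + w - x‖ ^ 2)
    (hyw : ‖firstOrderRemainder f y (y + w)‖ ≤ C * ‖y + w - y‖ ^ 2)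
    (hxy : ‖firstOrderRemainder f x y‖ ≤ C * ‖y - x‖ ^ 2) :
    ‖(fderiv ℝ f y - fderiv ℝ f x) w‖ ≤ 6 * C * ‖y - x‖ ^ 2 := by
  have hnorm : ‖y + w - x‖ ≤ 2 * ‖y - x‖ := by
    rw [add_sub_right_comm]
    linarith [norm_add_le (y - x) w]
  calc ‖(fderiv ℝ f y - fderiv ℝ f x) w‖
      ≤ ‖firstOrderRemainder f x (y + w)‖ + ‖firstOrderRemainder f y (y + w)‖ +
          ‖firstOrderRemainder f x y‖ := by
        rw [fderiv_sub_fderiv_apply]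
        exact (norm_sub_le _ _).trans (add_le_add_left (norm_sub_le _ _) _)
    _ ≤ C * (2 * ‖y - x‖) ^ 2 + C * ‖y - x‖ ^ 2 + C * ‖y - x‖ ^ 2 := by
        rw [add_sub_cancel_left, hw] at hyw
        exact add_le_add_three (hxw.trans (by gcongr)) hyw hxy
    _ = 6 * C * ‖y - x‖ ^ 2 := by ring

theorem exists_lipschitzOnWith_fderiv_of_isBigO {f : E → F} {a : E}
    (hf : (fun p : E × E => firstOrderRemainder f p.1 p.2) =O[𝓝 (a, a)]
      fun p => ‖p.2 - p.1‖ ^ 2) :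
    ∃ K, ∃ t ∈ 𝓝 a, LipschitzOnWith K (fderiv ℝ f) t := by
  obtain ⟨C, hC, hbound⟩ := hf.exists_nonneg
  obtain ⟨r, hr, hball⟩ := Metric.eventually_nhds_iff_ball.1 hbound.bound
  have hrem : ∀ x ∈ ball a r, ∀ z ∈ ball a r, ‖firstOrderRemainder f x z‖ ≤ C * ‖z - x‖ ^ 2 := by
    intro x hx z hz
    simpa using hball (x, z) (by rw [← ball_prod_same]; exact ⟨hx, hz⟩)
  refine ⟨(6 * C).toNNReal, ball a (r / 3), ball_mem_nhds a (by positivity),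
    LipschitzOnWith.of_dist_le_mul fun y hy x hx => ?_⟩
  rw [Real.coe_toNNReal _ (by positivity), dist_eq_norm, dist_eq_norm]
  rcases eq_or_ne y x with rfl | hyx
  · simp
  have hxr : x ∈ ball a r := ball_subset_ball (by linarith) hx
  have hyr : y ∈ ball a r := ball_subset_ball (by linarith) hy
  have hdist : ‖y - x‖ < 2 * r / 3 := by
    rw [← dist_eq_norm]
    linarith [dist_triangle_right y x a, mem_ball.1 hx, mem_ball.1 hy]
  have hpos : 0 < ‖y - x‖ := norm_pos_iff.2 (sub_ne_zero.2 hyx)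
  refine ContinuousLinearMap.opNorm_le_of_unit_norm (by positivity) fun v hv => ?_
  have hw : ‖‖y - x‖ • v‖ = ‖y - x‖ := by simp [norm_smul, hv]
  have hwr : y + ‖y - x‖ • v ∈ ball a r := by
    rw [mem_ball, dist_eq_norm, add_sub_right_comm]
    linarith [norm_add_le (y - a) (‖y - x‖ • v), mem_ball_iff_norm.1 hy]
  have happly := norm_fderiv_sub_fderiv_apply_le hC hw (hrem x hxr _ hwr) (hrem y hyr _ hwr)
    (hrem x hxr y hyr)
  rw [map_smul, norm_smul, norm_norm, sq] at happly
  exact le_of_mul_le_mul_left (by linarith) hpos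

theorem firstOrderRemainder_const_smul (c : ℝ) (f : E → F) (x z : E) :
    firstOrderRemainder (c • f) x z = c • firstOrderRemainder f x z := by
  simp only [firstOrderRemainder, fderiv_const_smul_field, Pi.smul_apply, smul_apply, smul_sub]

theorem firstOrderRemainder_neg (f : E → F) (x z : E) :
    firstOrderRemainder (-f) x z = -firstOrderRemainder f x z := by
  simpa using firstOrderRemainder_const_smul (-1) f x z

end Remainder

section PartialDerivatives

variable {E F G : Type*} [NormedAddCommGroup E] [NormedSpace ℝ E] [NormedAddCommGroup F]
  [NormedSpace ℝ F] [NormedAddCommGroup G] [NormedSpace ℝ G] {S : E → F → G}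

theorem hasFDerivAt_slice_left {f : E × F → G} {f' : E × F →L[ℝ] G} {x : E} {X : F}
    (hf : HasFDerivAt f f' (x, X)) :
    HasFDerivAt (fun x' => f (x', X)) (f'.comp (.inl ℝ E F)) x :=
  hf.comp x (hasFDerivAt_prodMk_left x X)

theorem hasFDerivAt_slice_right {f : E × F → G} {f' : E × F →L[ℝ] G} {x : E} {X : F}
    (hf : HasFDerivAt f f' (x, X)) :
    HasFDerivAt (fun X' => f (x, X')) (f'.comp (.inr ℝ E F)) X :=
  hf.comp X (hasFDerivAt_prodMk_right x X)

theorem fderiv_slice_left {x : E} {X : F} (hS : DifferentiableAt ℝ (uncurry S) (x, X)) :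
    fderiv ℝ (fun x' => S x' X) x = (fderiv ℝ (uncurry S) (x, X)).comp (.inl ℝ E F) :=
  (hasFDerivAt_slice_left hS.hasFDerivAt).fderiv

theorem fderiv_slice_right {x : E} {X : F} (hS : DifferentiableAt ℝ (uncurry S) (x, X)) :
    fderiv ℝ (S x) X = (fderiv ℝ (uncurry S) (x, X)).comp (.inr ℝ E F) :=
  (hasFDerivAt_slice_right hS.hasFDerivAt).fderiv

theorem contDiff_uncurry_swap {n : WithTop ℕ∞} (hS : ContDiff ℝ n (uncurry S)) :
    ContDiff ℝ n (uncurry (swap S)) :=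
  hS.comp (contDiff_snd.prodMk contDiff_fst)

theorem differentiable_fderiv_slice (hS : ContDiff ℝ 2 (uncurry S)) (X : F) :
    Differentiable ℝ fun x => fderiv ℝ (S x) X :=
  (hS.fderiv (n := 1) contDiff_const (by norm_num)).differentiable one_ne_zero

theorem fderiv_fderiv_slice_comm (hS : ContDiff ℝ 2 (uncurry S)) (x v : E) (X w : F) :
    fderiv ℝ (fun x' => fderiv ℝ (S x') X) x v w =
      fderiv ℝ (fun X' => fderiv ℝ (fun x' => S x' X') x) X w v := by
  have hd : Differentiable ℝ (uncurry S) := hS.differentiable two_ne_zero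
  have hd₂ : HasFDerivAt (fderiv ℝ (uncurry S)) (fderiv ℝ (fderiv ℝ (uncurry S)) (x, X)) (x, X) :=
    ((hS.fderiv_right (m := 1) (by norm_num)).differentiable one_ne_zero _).hasFDerivAt
  have hleft : fderiv ℝ (fun x' => fderiv ℝ (S x') X) x v w =
      fderiv ℝ (fderiv ℝ (uncurry S)) (x, X) (v, 0) (0, w) := by
    simp_rw [fderiv_slice_right (hd _)]
    rw [((hasFDerivAt_slice_left hd₂).clm_comp (hasFDerivAt_const (.inr ℝ E F) x)).fderiv]
    simp
  have hright : fderiv ℝ (fun X' => fderiv ℝ (fun x' => S x' X') x) X w v =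
      fderiv ℝ (fderiv ℝ (uncurry S)) (x, X) (0, w) (v, 0) := by
    simp_rw [fderiv_slice_left (hd _)]
    rw [((hasFDerivAt_slice_right hd₂).clm_comp (hasFDerivAt_const (.inl ℝ E F) X)).fderiv]
    simp
  rw [hleft, hright, hS.contDiffAt.isSymmSndFDerivAt (by simp)]

theorem isBigO_firstOrderRemainder_slice (hS : ContDiff ℝ 2 (uncurry S)) {h : E → F} {a : E}
    (hh : ContinuousAt h a) :
    (fun p : E × E => firstOrderRemainder (fun x => S x (h p.1)) p.1 p.2) =O[𝓝 (a, a)]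
      fun p => ‖p.2 - p.1‖ ^ 2 := by
  have hlim : Tendsto (fun p : E × E => ((p.1, h p.1), (p.2, h p.1))) (𝓝 (a, a))
      (𝓝 ((a, h a), (a, h a))) := by
    have hh₁ : ContinuousAt (fun p : E × E => h p.1) (a, a) := hh.comp continuousAt_fst
    exact ((continuousAt_fst.prodMk hh₁).prodMk (continuousAt_snd.prodMk hh₁)).tendsto
  refine ((isBigO_firstOrderRemainder hS.contDiffAt).comp_tendsto hlim).congr
    (fun p => ?_) fun p => ?_
  · have hd := hS.differentiable two_ne_zero (p.1, h p.1)
    simp only [firstOrderRemainder, fderiv_slice_left hd, comp_apply, uncurry_apply_pair,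
      ContinuousLinearMap.comp_apply, ContinuousLinearMap.inl_apply, Prod.mk_sub_mk, sub_self]
  · simp

theorem injective_of_fderiv_apply_self_ne_zero {φ : E → E →L[ℝ] ℝ} (hφ : Differentiable ℝ φ)
    (hne : ∀ x v, v ≠ 0 → fderiv ℝ φ x v v ≠ 0) : Injective φ := by
  intro x y hxy
  by_contra hne_xy
  have hderiv : ∀ t : ℝ, HasDerivAt (fun t : ℝ => φ (AffineMap.lineMap x y t) (y - x))
      (fderiv ℝ φ (AffineMap.lineMap x y t) (y - x) (y - x)) t := fun t => by
    simpa using ((hφ _).hasFDerivAt.comp_hasDerivAt t AffineMap.hasDerivAt_lineMap).clm_apply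
      (hasDerivAt_const t (y - x))
  obtain ⟨t, -, ht⟩ := exists_hasDerivAt_eq_zero zero_lt_one
    (fun t _ => (hderiv t).continuousAt.continuousWithinAt) (by simp [hxy]) fun t _ => hderiv t
  exact hne _ _ (sub_ne_zero.2 (Ne.symm hne_xy)) ht

end PartialDerivatives

section Variational

variable {E : Type*} [NormedAddCommGroup E]

/-- Superlinear growth of a generating function in the displacement `x - X`. -/
def IsSuperlinear (S : E → E → ℝ) : Prop :=
  ∀ A : ℝ, ∃ R : ℝ, ∀ x X, R ≤ ‖x - X‖ → A * ‖x - X‖ ≤ S x X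

variable {S : E → E → ℝ}

theorem IsSuperlinear.of_le_div
    (hS : ∀ A : ℝ, ∃ R : ℝ, ∀ x X : E, R ≤ ‖x - X‖ → A ≤ S x X / ‖x - X‖) :
    IsSuperlinear S := by
  intro A
  obtain ⟨R, hR⟩ := hS A
  refine ⟨max R 1, fun x X hxX => ?_⟩
  have hpos : 0 < ‖x - X‖ := one_pos.trans_le ((le_max_right R 1).trans hxX)
  exact (le_div_iff₀ hpos).1 (hR x X ((le_max_left R 1).trans hxX))

theorem IsSuperlinear.swap (hS : IsSuperlinear S) : IsSuperlinear (swap S) := by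
  intro A
  obtain ⟨R, hR⟩ := hS A
  refine ⟨R, fun X x hXx => ?_⟩
  rw [norm_sub_rev] at hXx ⊢
  exact hR x X hXx

theorem IsSuperlinear.tendsto_add {v : E → ℝ} (hS : IsSuperlinear S)
    (hv : v =O[cobounded E] id) (X : E) :
    Tendsto (fun x => v x + S x X) (cobounded E) atTop := by
  obtain ⟨C, hC, hbound⟩ := hv.exists_nonneg
  obtain ⟨R, hR⟩ := hS (C + 1)
  refine tendsto_atTop_mono' _ ?_
    (tendsto_atTop_add_const_right _ (-(C + 1) * ‖X‖) tendsto_norm_cobounded_atTop)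
  filter_upwards [hbound.bound, eventually_cobounded_le_norm (R + ‖X‖)] with x hvx hx
  have hdist : ‖x‖ - ‖X‖ ≤ ‖x - X‖ := norm_sub_norm_le x X
  have hv_ge : -(C * ‖x‖) ≤ v x := neg_le_of_abs_le hvx
  have hS_ge : (C + 1) * (‖x‖ - ‖X‖) ≤ S x X :=
    (mul_le_mul_of_nonneg_left hdist (by positivity)).trans (hR x X (by linarith))
  linarith

theorem neg_firstOrderRemainder_le_of_isMinOn [NormedSpace ℝ E] {v φ : E → ℝ} {x : E}
    (hmin : IsMinOn (fun z => v z + φ z) univ x) (hcrit : fderiv ℝ v x = -fderiv ℝ φ x) (z : E) :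
    -firstOrderRemainder φ x z ≤ firstOrderRemainder v x z := by
  have hxz : v x + φ x ≤ v z + φ z := hmin (mem_univ z)
  simp only [firstOrderRemainder, hcrit, neg_apply]
  linarith

variable [NormedSpace ℝ E] [FiniteDimensional ℝ E] {v : E → ℝ} {h : E → E}

theorem isMinOn_add_of_fderiv_eq_neg (hSd : ∀ X, Differentiable ℝ fun x => S x X)
    (hSsup : IsSuperlinear S) (htwist : ∀ x, Injective fun X => fderiv ℝ (fun x' => S x' X) x)
    (hv : Differentiable ℝ v) (hvO : v =O[cobounded E] id) (hh : Injective h)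
    (hcrit : ∀ x, fderiv ℝ v x = -fderiv ℝ (fun x' => S x' (h x)) x) (x : E) :
    IsMinOn (fun x' => v x' + S x' (h x)) univ x := by
  have : ProperSpace E := FiniteDimensional.proper ℝ E
  have hcoer := hSsup.tendsto_add hvO (h x)
  rw [cobounded_eq_cocompact] at hcoer
  obtain ⟨z, hz⟩ := (hv.add (hSd (h x))).continuous.exists_forall_le hcoer
  have hz_crit : fderiv ℝ v z + fderiv ℝ (fun x' => S x' (h x)) z = 0 := by
    rw [← fderiv_add (hv z) (hSd (h x) z)]
    exact IsLocalMin.fderiv_eq_zero (Eventually.of_forall hz)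
  rw [hcrit, neg_add_eq_zero] at hz_crit
  obtain rfl : x = z := hh (htwist z hz_crit).symm
  exact fun y _ => hz y

theorem exists_neg_mul_sq_le_firstOrderRemainder (hS : ContDiff ℝ 2 (uncurry S))
    (hSsup : IsSuperlinear S) (htwist : ∀ x, Injective fun X => fderiv ℝ (fun x' => S x' X) x)
    (hv : Differentiable ℝ v) (hvO : v =O[cobounded E] id) (hh : Injective h)
    (hhc : Continuous h) (hcrit : ∀ x, fderiv ℝ v x = -fderiv ℝ (fun x' => S x' (h x)) x)
    (a : E) :
    ∃ C, ∀ᶠ p in 𝓝 (a, a), -(C * ‖p.2 - p.1‖ ^ 2) ≤ firstOrderRemainder v p.1 p.2 := by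
  obtain ⟨C, hC⟩ := (isBigO_firstOrderRemainder_slice hS (hhc.continuousAt (x := a))).bound
  have hSd : ∀ X, Differentiable ℝ fun x => S x X := fun X =>
    (hS.differentiable two_ne_zero).comp (differentiable_id.prodMk (differentiable_const X))
  refine ⟨C, hC.mono fun p hp => ?_⟩
  rw [norm_pow, norm_norm] at hp
  exact (neg_le_neg (le_of_abs_le hp)).trans (neg_firstOrderRemainder_le_of_isMinOn
    (isMinOn_add_of_fderiv_eq_neg hSd hSsup htwist hv hvO hh hcrit p.1) (hcrit p.1) p.2)

theorem locallyLipschitz_fderiv_of_generating (hS : ContDiff ℝ 2 (uncurry S))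
    (hSsup : IsSuperlinear S)
    (hmixed : ∀ x X w, w ≠ 0 → fderiv ℝ (fun x' => fderiv ℝ (S x') X) x w w ≠ 0)
    {u : E → ℝ} (hu : Differentiable ℝ u) (huO : u =O[cobounded E] id)
    {lam : ℝ} (hlam : 0 < lam) (g : E ≃ₜ E)
    (hleft : ∀ x, lam • fderiv ℝ u x = -fderiv ℝ (fun x' => S x' (g x)) x)
    (hright : ∀ x, fderiv ℝ u (g x) = fderiv ℝ (S x) (g x)) :
    LocallyLipschitz (fderiv ℝ u) := by
  intro a
  have htwist_right : ∀ X, Injective fun x => fderiv ℝ (S x) X := fun X =>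
    injective_of_fderiv_apply_self_ne_zero (differentiable_fderiv_slice hS X) (hmixed · X)
  have htwist_left : ∀ x, Injective fun X => fderiv ℝ (fun x' => S x' X) x := fun x =>
    injective_of_fderiv_apply_self_ne_zero
      (differentiable_fderiv_slice (contDiff_uncurry_swap hS) x) fun X w hw => by
        rw [← fderiv_fderiv_slice_comm hS]
        exact hmixed x X w hw
  obtain ⟨C, hC⟩ := exists_neg_mul_sq_le_firstOrderRemainder hS hSsup htwist_left
    (hu.const_smul lam) (huO.const_smul_left lam) g.injective g.continuous
    (fun x => by rw [fderiv_const_smul_field, Pi.smul_apply, hleft]) a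
  obtain ⟨C', hC'⟩ := exists_neg_mul_sq_le_firstOrderRemainder (contDiff_uncurry_swap hS)
    hSsup.swap htwist_right hu.neg huO.neg_left g.symm.injective g.symm.continuous
    (fun X => by simpa [fderiv_neg] using hright (g.symm X)) a
  refine exists_lipschitzOnWith_fderiv_of_isBigO (.of_bound (max (C / lam) C') ?_)
  filter_upwards [hC, hC'] with p hp hp'
  rw [firstOrderRemainder_const_smul, smul_eq_mul] at hp
  rw [firstOrderRemainder_neg, neg_le_neg_iff] at hp'
  rw [norm_pow, norm_norm, Real.norm_eq_abs, max_mul_of_nonneg _ _ (by positivity), abs_le',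
    div_mul_eq_mul_div]
  refine ⟨le_max_of_le_right hp', le_max_of_le_left ?_⟩
  rw [le_div_iff₀ hlam]
  linarith

end Variational

section Lipschitz

theorem locallyLipschitz_of_conj_graph {E : Type*} [PseudoEMetricSpace E] {Φ : E × E → E × E}
    {ψ h : E → E} (hΦ : LocallyLipschitz Φ) (hψ : LocallyLipschitz ψ)
    (hconj : ∀ x, Φ (x, ψ x) = (h x, ψ (h x))) : LocallyLipschitz h := by
  have hfst : h = Prod.fst ∘ Φ ∘ fun x => (x, ψ x) := funext fun x => by simp [hconj]
  rw [hfst]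
  exact LipschitzWith.prod_fst.locallyLipschitz.comp (hΦ.comp (LocallyLipschitz.id.prodMk hψ))

variable {E Y : Type*} [NormedAddCommGroup E] [NormedSpace ℝ E] [PseudoMetricSpace Y]

theorem lipschitzWith_of_forall_closedBall {h : E → Y} {K : NNReal} {r : ℝ} (hr : 0 < r)
    (hK : ∀ x, LipschitzOnWith K h (closedBall x r)) : LipschitzWith K h := by
  refine LipschitzWith.of_dist_le_mul fun x z => ?_
  obtain ⟨n, hn⟩ := exists_nat_gt (dist x z / r)
  have hn₀ : (0 : ℝ) < n := lt_of_le_of_lt (by positivity) hn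
  let p : ℕ → E := fun k => AffineMap.lineMap x z (k / n : ℝ)
  have hstep : ∀ k, dist (p k) (p (k + 1)) = dist x z / n := fun k => by
    rw [dist_lineMap_lineMap, dist_comm, Real.dist_eq, Nat.cast_succ, add_div, add_sub_cancel_left,
      abs_of_nonneg (by positivity), one_div_mul_eq_div]
  have hsmall : dist x z / n ≤ r := by
    rw [div_le_iff₀ hn₀, mul_comm]
    exact ((div_lt_iff₀ hr).1 hn).le
  calc dist (h x) (h z) = dist (h (p 0)) (h (p n)) := by simp [p, div_self hn₀.ne']
    _ ≤ ∑ _k ∈ Finset.range n, K * (dist x z / n) :=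
        dist_le_range_sum_of_dist_le (f := fun k => h (p k)) n fun {k} _ => by
          rw [← hstep k]
          refine (hK (p k)).dist_le_mul _ (mem_closedBall_self hr.le) _ ?_
          rw [mem_closedBall', hstep]
          exact hsmall
    _ = K * dist x z := by
        rw [Finset.sum_const, Finset.card_range, nsmul_eq_mul]
        field_simp

end Lipschitz

section Torus

variable {d : ℕ}

/-- `h` commutes with integer translations, so it is a lift of a self-map of the torus homotopic to
the identity. -/
def ZdEquivariant (h : (Fin d → ℝ) → (Fin d → ℝ)) : Prop :=
  ∀ (x : Fin d → ℝ) (m : Fin d → ℤ),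
    h (x + fun i => (m i : ℝ)) = h x + fun i => (m i : ℝ)

theorem exists_int_translate_mem_closedBall (x : Fin d → ℝ) :
    ∃ m : Fin d → ℤ, x - (fun i => (m i : ℝ)) ∈ closedBall 0 1 := by
  refine ⟨fun i => ⌊x i⌋, mem_closedBall_zero_iff.2 ?_⟩
  refine (pi_norm_le_iff_of_nonneg zero_le_one).2 fun i => ?_
  rw [Pi.sub_apply, Int.self_sub_floor, Real.norm_eq_abs, Int.abs_fract]
  exact (Int.fract_lt_one _).le

theorem ZdEquivariant.symm {g : (Fin d → ℝ) ≃ (Fin d → ℝ)} (hg : ZdEquivariant g) :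
    ZdEquivariant g.symm := fun x m => by
  rw [Equiv.symm_apply_eq, hg, Equiv.apply_symm_apply]

theorem ZdEquivariant.exists_lipschitzWith {h : (Fin d → ℝ) → (Fin d → ℝ)}
    (hper : ZdEquivariant h) (hh : LocallyLipschitz h) : ∃ K, LipschitzWith K h := by
  obtain ⟨K, hK⟩ := hh.locallyLipschitzOn.exists_lipschitzOnWith_of_compact
    (isCompact_closedBall (0 : Fin d → ℝ) 2)
  refine ⟨K, lipschitzWith_of_forall_closedBall one_pos fun x => ?_⟩
  obtain ⟨m, hm⟩ := exists_int_translate_mem_closedBall x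
  have htranslate : ∀ y ∈ closedBall x 1, y - (fun i => (m i : ℝ)) ∈ closedBall 0 2 := by
    intro y hy
    rw [mem_closedBall, ← dist_sub_right y x fun i => (m i : ℝ)] at hy
    exact closedBall_subset_closedBall' (by rw [mem_closedBall] at hm; linarith) hy
  refine LipschitzOnWith.of_dist_le_mul fun y hy z hz => ?_
  have hyz := hK.dist_le_mul _ (htranslate y hy) _ (htranslate z hz)
  rwa [dist_sub_right, ← dist_add_right (h _) (h _) fun i => (m i : ℝ), ← hper, ← hper,
    sub_add_cancel, sub_add_cancel] at hyz

theorem ZdPeriodic.isBigO_one {f : (Fin d → ℝ) → ℝ} (hper : ZdPeriodic f) (hf : Continuous f)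
    (l : Filter (Fin d → ℝ)) : f =O[l] fun _ => (1 : ℝ) := by
  obtain ⟨M, hM⟩ := (isCompact_closedBall (0 : Fin d → ℝ) 1).exists_bound_of_continuousOn
    hf.continuousOn
  refine .of_bound M (.of_forall fun x => ?_)
  obtain ⟨m, hm⟩ := exists_int_translate_mem_closedBall x
  rw [norm_one, mul_one, ← sub_add_cancel x fun i => (m i : ℝ), hper]
  exact hM _ hm

theorem ZdPeriodic.gradVec_add_int {f : (Fin d → ℝ) → ℝ} (hper : ZdPeriodic f)
    (x : Fin d → ℝ) (m : Fin d → ℤ) : gradVec f (x + fun i => (m i : ℝ)) = gradVec f x := by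
  ext i
  simp only [gradVec, ← fderiv_comp_add_right, hper _ m]

end Torus

section Coordinates

variable {d : ℕ}

theorem clm_apply_eq_dotProduct (L : (Fin d → ℝ) →L[ℝ] ℝ) (v : Fin d → ℝ) :
    L v = v ⬝ᵥ fun i => L (Pi.single i 1) := by
  conv_lhs => rw [pi_eq_sum_univ' v, map_sum]
  simp [dotProduct]

theorem fderiv_apply_eq_dotProduct_gradVec (f : (Fin d → ℝ) → ℝ) (x v : Fin d → ℝ) :
    fderiv ℝ f x v = v ⬝ᵥ gradVec f x :=
  clm_apply_eq_dotProduct (fderiv ℝ f x) v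

theorem locallyLipschitz_gradVec {f : (Fin d → ℝ) → ℝ} (hf : LocallyLipschitz (fderiv ℝ f)) :
    LocallyLipschitz (gradVec f) :=
  (ContinuousLinearMap.pi fun i =>
    ContinuousLinearMap.apply ℝ ℝ (Pi.single i 1 : Fin d → ℝ)).lipschitz.locallyLipschitz.comp hf

theorem dotProduct_hessXY_mulVec {S : (Fin d → ℝ) → (Fin d → ℝ) → ℝ}
    (hS : ContDiff ℝ 2 (uncurry S)) (x X v : Fin d → ℝ) :
    v ⬝ᵥ (hessXY S x X).mulVec v = fderiv ℝ (fun x' => fderiv ℝ (S x') X) x v v := by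
  have hrow : ∀ i, hessXY S x X i = fun j =>
      fderiv ℝ (fun x' => fderiv ℝ (S x') X) x (Pi.single i 1) (Pi.single j 1) := fun i => by
    ext j
    simp only [hessXY, grad2, Matrix.of_apply]
    rw [fderiv_clm_apply (differentiable_fderiv_slice hS X x) (differentiableAt_const _)]
    simp
  rw [← ContinuousLinearMap.flip_apply, clm_apply_eq_dotProduct]
  congr 1 with i
  rw [Matrix.mulVec, hrow, dotProduct_comm, ContinuousLinearMap.flip_apply,
    ← clm_apply_eq_dotProduct]

theorem dotProduct_mulVec_ne_zero_of_neg_posDef {A : Matrix (Fin d) (Fin d) ℝ}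
    (hA : (-A).PosDef) {v : Fin d → ℝ} (hv : v ≠ 0) : v ⬝ᵥ A.mulVec v ≠ 0 := by
  simpa [Matrix.neg_mulVec] using (hA.dotProduct_mulVec_pos hv).ne'

/-- The linear form `x ↦ c ⬝ᵥ x`, continuous as it acts on a finite-dimensional space. -/
def dotProductCLM (c : Fin d → ℝ) : (Fin d → ℝ) →L[ℝ] ℝ :=
  (dotProductEquiv ℝ (Fin d) c).toContinuousLinearMap

/-- A primitive of the closed form `c + Dη`, so that the Lagrangian graph is the graph of its
gradient. -/
def graphPotential (c : Fin d → ℝ) (η : (Fin d → ℝ) → ℝ) (x : Fin d → ℝ) : ℝ :=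
  dotProductCLM c x + η x

theorem differentiable_graphPotential (c : Fin d → ℝ) {η : (Fin d → ℝ) → ℝ}
    (hη : Differentiable ℝ η) : Differentiable ℝ (graphPotential c η) :=
  (dotProductCLM c).differentiable.add hη

theorem gradVec_graphPotential (c : Fin d → ℝ) {η : (Fin d → ℝ) → ℝ} (hη : Differentiable ℝ η)
    (x : Fin d → ℝ) : gradVec (graphPotential c η) x = c + gradVec η x := by
  have hderiv : fderiv ℝ (graphPotential c η) x = dotProductCLM c + fderiv ℝ η x :=
    ((dotProductCLM c).hasFDerivAt.add (hη x).hasFDerivAt).fderiv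
  ext i
  simp [gradVec, hderiv, dotProductCLM]

theorem isBigO_graphPotential (c : Fin d → ℝ) {η : (Fin d → ℝ) → ℝ} (hη : Continuous η)
    (hper : ZdPeriodic η) : graphPotential c η =O[cobounded (Fin d → ℝ)] id :=
  ((dotProductCLM c).isBigO_id _).add
    ((hper.isBigO_one hη _).trans (isLittleO_const_id_cobounded (1 : ℝ)).isBigO)

end Coordinates

section Conjugacy

variable {d : ℕ} {S : (Fin d → ℝ) → (Fin d → ℝ) → ℝ}

theorem locallyLipschitz_add_gradVec_of_generating (hS : ContDiff ℝ 2 (uncurry S))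
    (hSsup : IsSuperlinear S)
    (hmixed : ∀ x X v, v ≠ 0 → v ⬝ᵥ (hessXY S x X).mulVec v ≠ 0)
    {c : Fin d → ℝ} {η : (Fin d → ℝ) → ℝ} (hη : ContDiff ℝ 1 η) (hηper : ZdPeriodic η)
    {lam : ℝ} (hlam : 0 < lam) (g : (Fin d → ℝ) ≃ₜ (Fin d → ℝ))
    (hleft : ∀ x, lam • (c + gradVec η x) = -grad1 S x (g x))
    (hright : ∀ x, c + gradVec η (g x) = grad2 S x (g x)) :
    LocallyLipschitz fun x => c + gradVec η x := by
  have hηd : Differentiable ℝ η := hη.differentiable one_ne_zero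
  simp_rw [← gradVec_graphPotential c hηd] at hleft hright ⊢
  refine locallyLipschitz_gradVec (locallyLipschitz_fderiv_of_generating hS hSsup
    (fun x X v hv => dotProduct_hessXY_mulVec hS x X v ▸ hmixed x X v hv)
    (differentiable_graphPotential c hηd) (isBigO_graphPotential c hη.continuous hηper) hlam g
    (fun x => ?_) fun x => ?_)
  · ext v
    simp only [smul_apply, neg_apply, fderiv_apply_eq_dotProduct_gradVec]
    rw [← dotProduct_smul, hleft, dotProduct_neg]
    rfl
  · ext v
    simp only [fderiv_apply_eq_dotProduct_gradVec, hright]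
    rfl

theorem conjugacy_is_biLipschitz_general {lam : ℝ} (hlam : 0 < lam)
    (hS : ContDiff ℝ 2 (uncurry S))
    (hmixed : ∀ x X v, v ≠ 0 → v ⬝ᵥ (hessXY S x X).mulVec v ≠ 0) (hSsup : IsSuperlinear S)
    {F Finv : (Fin d → ℝ) × (Fin d → ℝ) → (Fin d → ℝ) × (Fin d → ℝ)}
    (hF : LocallyLipschitz F) (hFinv : LocallyLipschitz Finv) (hFl : LeftInverse Finv F)
    (hFper : ∀ (p : (Fin d → ℝ) × (Fin d → ℝ)) (m : Fin d → ℤ),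
      F (p.1 + fun i => (m i : ℝ), p.2) = ((F p).1 + fun i => (m i : ℝ), (F p).2))
    (hgen : ∀ p : (Fin d → ℝ) × (Fin d → ℝ),
      lam • p.2 = -(grad1 S p.1 (F p).1) ∧ (F p).2 = grad2 S p.1 (F p).1)
    {c : Fin d → ℝ} {η : (Fin d → ℝ) → ℝ} (hη : ContDiff ℝ 1 η) (hηper : ZdPeriodic η)
    {Ψ : (Fin d → ℝ) → (Fin d → ℝ)} (hΨ : ∀ x, Ψ x = c + gradVec η x)
    (g : (Fin d → ℝ) ≃ₜ (Fin d → ℝ)) (hconj : ∀ x, F (x, Ψ x) = (g x, Ψ (g x))) :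
    ∃ Kg Kginv : NNReal, LipschitzWith Kg g ∧ LipschitzWith Kginv g.symm := by
  obtain rfl : Ψ = fun x => c + gradVec η x := funext hΨ
  have hΨ_lip : LocallyLipschitz fun x => c + gradVec η x :=
    locallyLipschitz_add_gradVec_of_generating hS hSsup hmixed hη hηper hlam g
      (fun x => by simpa only [hconj] using (hgen (x, c + gradVec η x)).1)
      fun x => by simpa only [hconj] using (hgen (x, c + gradVec η x)).2
  have hg_equivariant : ZdEquivariant g := fun x m => by
    have hFx := congrArg Prod.fst (hFper (x, c + gradVec η x) m)
    rwa [← hηper.gradVec_add_int x m, hconj, hηper.gradVec_add_int x m, hconj] at hFx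
  have hg_symm_equivariant : ZdEquivariant g.symm :=
    ZdEquivariant.symm (g := g.toEquiv) hg_equivariant
  have hconj_symm (x) : Finv (x, c + gradVec η x) = (g.symm x, c + gradVec η (g.symm x)) := by
    rw [← hFl (g.symm x, _), hconj, g.apply_symm_apply]
  obtain ⟨Kg, hKg⟩ := hg_equivariant.exists_lipschitzWith <|
    locallyLipschitz_of_conj_graph hF hΨ_lip hconj
  obtain ⟨Kginv, hKginv⟩ := hg_symm_equivariant.exists_lipschitzWith <|
    locallyLipschitz_of_conj_graph hFinv hΨ_lip hconj_symm
  exact ⟨Kg, Kginv, hKg, hKginv⟩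

end Conjugacy

theorem conjugacy_is_biLipschitz (d : ℕ) (lam : ℝ) (hlam : lam ∈ Set.Ioo (0 : ℝ) 1)
    (S : (Fin d → ℝ) → (Fin d → ℝ) → ℝ)
    (hS : ContDiff ℝ 2 (fun p : (Fin d → ℝ) × (Fin d → ℝ) => S p.1 p.2))
    (hSper : ∀ (x X : Fin d → ℝ) (m : Fin d → ℤ),
      S (x + fun i => (m i : ℝ)) (X + fun i => (m i : ℝ)) = S x X)
    (hpos1 : ∀ x X : Fin d → ℝ, (hessXX S x X).PosDef)
    (hpos2 : ∀ x X : Fin d → ℝ, (hessYY S x X).PosDef)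
    (hneg : ∀ x X : Fin d → ℝ, (-(hessXY S x X)).PosDef)
    (hcoer : ∀ A : ℝ, ∃ R : ℝ, ∀ x X : Fin d → ℝ, R ≤ ‖x - X‖ → A ≤ S x X / ‖x - X‖)
    (F Finv : (Fin d → ℝ) × (Fin d → ℝ) → (Fin d → ℝ) × (Fin d → ℝ))
    (hF : ContDiff ℝ 1 F) (hFinv : ContDiff ℝ 1 Finv)
    (hFl : ∀ p, Finv (F p) = p) (hFr : ∀ p, F (Finv p) = p)
    (hFper : ∀ (p : (Fin d → ℝ) × (Fin d → ℝ)) (m : Fin d → ℤ),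
      F (p.1 + fun i => (m i : ℝ), p.2) = ((F p).1 + fun i => (m i : ℝ), (F p).2))
    (hgen : ∀ p : (Fin d → ℝ) × (Fin d → ℝ),
      lam • p.2 = -(grad1 S p.1 (F p).1) ∧ (F p).2 = grad2 S p.1 (F p).1)
    (c : Fin d → ℝ) (η : (Fin d → ℝ) → ℝ) (hη : ContDiff ℝ 1 η) (hηper : ZdPeriodic η)
    (Ψ : (Fin d → ℝ) → (Fin d → ℝ)) (hΨ : ∀ x, Ψ x = c + gradVec η x)
    (hinv : F '' {p | p.2 = Ψ p.1} = {p | p.2 = Ψ p.1})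
    -- g is the homeomorphism with F(x, Ψ x) = (g x, Ψ (g x))
    (g ginv : (Fin d → ℝ) → (Fin d → ℝ))
    (hgc : Continuous g) (hginvc : Continuous ginv)
    (hgl : ∀ x, ginv (g x) = x) (hgr : ∀ x, g (ginv x) = x)
    (hconj : ∀ x, F (x, Ψ x) = (g x, Ψ (g x))) :
    -- g is bi-Lipschitz
    ∃ Kg Kginv : NNReal, LipschitzWith Kg g ∧ LipschitzWith Kginv ginv :=
  conjugacy_is_biLipschitz_general hlam.1 hS
    (fun x X _ hv => dotProduct_mulVec_ne_zero_of_neg_posDef (hneg x X) hv)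
    (IsSuperlinear.of_le_div hcoer) hF.locallyLipschitz hFinv.locallyLipschitz hFl hFper hgen
    hη hηper hΨ ⟨⟨g, ginv, hgl, hgr⟩, hgc, hginvc⟩ hconj
end
end

section
/- Let d≥1 and Δ>0. There exists a sequence (f_n)_{n≥1} of C^∞ ℤ^d-periodic functions f_n:ℝ^d→ℝ such that for every n≥1: ∫_{[0,1]^d} f_n(x)dx = 0; min_{x∈[0,1]^d} f_n(x) = −(Δ + 1/(4n)); max_{x∈[0,1]^d} f_n(x) = 3/(4n); and for every integer k≥0 there is a constant C>0 (depending only on d, Δ and k) with ‖f_n‖_{C^k} ≤ C·n^{(k+1)/d} for all n≥1. -/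
noncomputable section

open Real MeasureTheory

/-!
A fixed smooth bump supported in the open unit cube and with integral `I` close to `1`, shrunk
around the centre of the cube by a factor `l ≥ 1` and repeated periodically, has mean `I / l ^ d`,
and its derivatives of order `k` are of size `l ^ k`. Hence every mean `t ≤ I` is attained by
`l = (I / t) ^ (1 / d)`. If `φ` has mean `b / (a + b)` and extrema `0` and `1`, then
`b - (a + b) φ` has mean `0` and extrema `-a` and `b`. For `a = Δ + 1 / (4 n)` and
`b = 3 / (4 n)` the mean of `φ` is at most `3 / 4` and at least of order `1 / n`, so that `l` is at
most of order `n ^ (1 / d)`.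
-/

section Bumps

open Set Metric Filter Topology Function

/-- The `ℤ^ι`-periodic function that agrees with `g` on `[0, 1)^ι`. For `g` supported in that cube
it is the sum of the integer translates of `g`. -/
def periodization {ι F : Type*} (g : (ι → ℝ) → F) (x : ι → ℝ) : F :=
  g fun i => Int.fract (x i)

lemma periodization_add_intCast {ι F : Type*} (g : (ι → ℝ) → F) (x : ι → ℝ) (m : ι → ℤ) :
    periodization g (x + fun i => (m i : ℝ)) = periodization g x := by
  simp only [periodization, Pi.add_apply, Int.fract_add_intCast]

lemma periodization_of_forall_mem_Ico {ι F : Type*} (g : (ι → ℝ) → F) {x : ι → ℝ}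
    (hx : ∀ i, x i ∈ Ico (0 : ℝ) 1) : periodization g x = g x :=
  congrArg g <| funext fun i => Int.fract_eq_self.2 (hx i)

lemma lt_abs_sub_half_of_floor_ne {u v r : ℝ} (huv : |v - u| < 1 / 2 - r) (h : ⌊v⌋ ≠ ⌊u⌋) :
    r < |Int.fract v - 1 / 2| ∧ r < |v - ⌊u⌋ - 1 / 2| := by
  have hu := Int.floor_le u
  have hu' := Int.lt_floor_add_one u
  have hv := Int.floor_le v
  have hv' := Int.lt_floor_add_one v
  rw [abs_lt] at huv
  rw [Int.fract, lt_abs, lt_abs]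
  rcases lt_or_gt_of_ne h with h | h
  · have h' : (⌊v⌋ : ℝ) + 1 ≤ ⌊u⌋ := by exact_mod_cast h
    exact ⟨.inl (by linarith), .inr (by linarith)⟩
  · have h' : (⌊u⌋ : ℝ) + 1 ≤ ⌊v⌋ := by exact_mod_cast h
    exact ⟨.inr (by linarith), .inl (by linarith)⟩

variable {ι : Type*} [Fintype ι]

/- Where a coordinate crosses an integer, both sides vanish because the support of `g` keeps a
positive distance from the faces of the cube. -/
lemma periodization_eventuallyEq {F : Type*} [Zero F] {g : (ι → ℝ) → F} {r : ℝ}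
    (hr : r < 1 / 2) (hg : support g ⊆ closedBall (fun _ => 1 / 2) r) (x : ι → ℝ) :
    periodization g =ᶠ[𝓝 x] fun y => g (y - fun i => (⌊x i⌋ : ℝ)) := by
  have hzero : ∀ z : ι → ℝ, ∀ i, r < |z i - 1 / 2| → g z = 0 := fun z i hi =>
    notMem_support.1 fun hz =>
      (hi.trans_le (dist_le_pi_dist z (fun _ => 1 / 2) i)).not_ge (hg hz)
  filter_upwards [ball_mem_nhds x (sub_pos.2 hr)] with y hy
  by_cases h : ∀ i, ⌊y i⌋ = ⌊x i⌋
  · exact congrArg g <| funext fun i => by rw [Int.fract, h, Pi.sub_apply]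
  · obtain ⟨i, hi⟩ := not_forall.1 h
    obtain ⟨hfract, hfloor⟩ := lt_abs_sub_half_of_floor_ne ((dist_le_pi_dist y x i).trans_lt hy) hi
    rw [periodization, hzero _ i hfract, hzero _ i hfloor]

section Periodization

variable {F : Type*} [NormedAddCommGroup F] [NormedSpace ℝ F] {g : (ι → ℝ) → F} {r : ℝ}

lemma setIntegral_periodization (hg : support g ⊆ Icc 0 1) :
    ∫ x in Icc 0 1, periodization g x = ∫ x, g x := by
  have hIco : (univ.pi fun _ => Ico 0 1 : Set (ι → ℝ)) =ᵐ[volume] Icc 0 1 :=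
    Measure.univ_pi_Ico_ae_eq_Icc
  calc ∫ x in Icc 0 1, periodization g x
      = ∫ x in univ.pi fun _ => Ico 0 1, periodization g x := (setIntegral_congr_set hIco).symm
    _ = ∫ x in univ.pi fun _ => Ico 0 1, g x :=
        setIntegral_congr_fun (MeasurableSet.univ_pi fun _ => measurableSet_Ico) fun x hx =>
          periodization_of_forall_mem_Ico g fun i => hx i trivial
    _ = ∫ x in Icc 0 1, g x := setIntegral_congr_set hIco
    _ = ∫ x, g x := setIntegral_eq_integral_of_forall_compl_eq_zero fun x hx =>
        notMem_support.1 fun h => hx (hg h)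

lemma contDiff_periodization {n : WithTop ℕ∞} (hr : r < 1 / 2)
    (hg : support g ⊆ closedBall (fun _ => 1 / 2) r) (hsmooth : ContDiff ℝ n g) :
    ContDiff ℝ n (periodization g) :=
  contDiff_iff_contDiffAt.2 fun x =>
    (hsmooth.comp (contDiff_id.sub contDiff_const)).contDiffAt.congr_of_eventuallyEq
      (periodization_eventuallyEq hr hg x)

lemma iteratedFDeriv_periodization (hr : r < 1 / 2)
    (hg : support g ⊆ closedBall (fun _ => 1 / 2) r) (k : ℕ) :
    iteratedFDeriv ℝ k (periodization g) = periodization (iteratedFDeriv ℝ k g) := by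
  funext x
  rw [((periodization_eventuallyEq hr hg x).iteratedFDeriv ℝ k).eq_of_nhds,
    iteratedFDeriv_comp_sub]
  rfl

end Periodization

section PeriodicBump

/-- The bump `b` shrunk by the factor `l` around the centre of the unit cube and repeated
`ℤ^ι`-periodically. For `1 ≤ l` and `b.rOut < 1 / 2` the copies do not meet. -/
def periodicBump (b : ContDiffBump (0 : ι → ℝ)) (l : ℝ) : (ι → ℝ) → ℝ :=
  periodization fun x => b (l • (x - fun _ => 1 / 2))

variable (b : ContDiffBump (0 : ι → ℝ)) {l : ℝ}

lemma support_bump_comp_smul_sub_subset (hl : 1 ≤ l) (c : ι → ℝ) :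
    support (fun x => b (l • (x - c))) ⊆ closedBall c b.rOut := by
  intro x hx
  have hball : l • (x - c) ∈ ball 0 b.rOut := by
    rw [← b.support_eq]
    exact hx
  rw [mem_ball_zero_iff, norm_smul, Real.norm_of_nonneg (by linarith)] at hball
  rw [mem_closedBall_iff_norm]
  exact (le_mul_of_one_le_left (norm_nonneg _) hl).trans hball.le

lemma contDiff_periodicBump (hb : b.rOut < 1 / 2) (hl : 1 ≤ l) {n : ℕ∞} :
    ContDiff ℝ n (periodicBump b l) :=
  contDiff_periodization hb (support_bump_comp_smul_sub_subset b hl _)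
    (b.contDiff.comp ((contDiff_id.sub contDiff_const).const_smul l))

lemma periodicBump_center : periodicBump b l (fun _ => 1 / 2) = 1 := by
  have hhalf : Int.fract (1 / 2 : ℝ) = 1 / 2 := Int.fract_eq_self.2 (by norm_num)
  rw [periodicBump, periodization]
  simp only [hhalf]
  rw [sub_self, smul_zero]
  exact b.one_of_mem_closedBall (mem_closedBall_self b.rIn_pos.le)

lemma periodicBump_zero [Nonempty ι] (hb : b.rOut < 1 / 2) (hl : 1 ≤ l) :
    periodicBump b l 0 = 0 := by
  rw [periodicBump, periodization_of_forall_mem_Ico _ fun _ => by simp]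
  by_contra h
  have hnorm := mem_closedBall_iff_norm.1 (support_bump_comp_smul_sub_subset b hl _ h)
  rw [zero_sub, norm_neg, pi_norm_const, Real.norm_of_nonneg (by norm_num)] at hnorm
  exact hb.not_ge hnorm

lemma setIntegral_periodicBump (hb : b.rOut ≤ 1 / 2) (hl : 1 ≤ l) :
    ∫ x in Icc 0 1, periodicBump b l x = (∫ x, b x) / l ^ Fintype.card ι := by
  have hcube : closedBall (fun _ : ι => (1 / 2 : ℝ)) b.rOut ⊆ Icc 0 1 := by
    intro x hx
    have hxi : ∀ i, |x i - 1 / 2| ≤ 1 / 2 := fun i =>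
      (dist_le_pi_dist x _ i).trans ((mem_closedBall.1 hx).trans hb)
    exact ⟨fun i => by simp only [Pi.zero_apply]; linarith [(abs_le.1 (hxi i)).1],
      fun i => by simp only [Pi.one_apply]; linarith [(abs_le.1 (hxi i)).2]⟩
  have : 0 ≤ l := by linarith
  rw [periodicBump, setIntegral_periodization
      ((support_bump_comp_smul_sub_subset b hl _).trans hcube),
    integral_sub_right_eq_self (fun x => b (l • x)), Measure.integral_comp_smul,
    abs_of_nonneg (by positivity), Module.finrank_fintype_fun_eq_card, smul_eq_mul,
    inv_mul_eq_div]

lemma norm_iteratedFDeriv_periodicBump_le (hb : b.rOut < 1 / 2) (hl : 1 ≤ l) {k : ℕ} {C : ℝ}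
    (hC : ∀ x, ‖iteratedFDeriv ℝ k b x‖ ≤ C) (x : ι → ℝ) :
    ‖iteratedFDeriv ℝ k (periodicBump b l) x‖ ≤ C * l ^ k := by
  have hl0 : 0 ≤ l := by linarith
  rw [periodicBump, iteratedFDeriv_periodization hb (support_bump_comp_smul_sub_subset b hl _),
    periodization, iteratedFDeriv_comp_sub (f := fun x => b (l • x)),
    iteratedFDeriv_comp_const_smul l b.contDiff, norm_smul, norm_pow, Real.norm_of_nonneg hl0,
    mul_comm]
  gcongr
  exact hC _

lemma exists_forall_le_norm_iteratedFDeriv_periodicBump_le (hb : b.rOut < 1 / 2) (k : ℕ) :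
    ∃ C, 0 ≤ C ∧ ∀ l, 1 ≤ l → ∀ i ≤ k, ∀ x,
      ‖iteratedFDeriv ℝ i (periodicBump b l) x‖ ≤ C * l ^ k := by
  have hbounded : ∀ i, ∃ c, ∀ x, ‖iteratedFDeriv ℝ i b x‖ ≤ c := fun i =>
    (b.hasCompactSupport.iteratedFDeriv i).exists_bound_of_continuous
      ((b.contDiff (n := i)).continuous_iteratedFDeriv le_rfl)
  choose c hc using hbounded
  have hc0 : ∀ i, 0 ≤ c i := fun i => (norm_nonneg _).trans (hc i 0)
  refine ⟨∑ i ∈ Finset.range (k + 1), c i, Finset.sum_nonneg fun i _ => hc0 i,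
    fun l hl i hi x => (norm_iteratedFDeriv_periodicBump_le b hb hl (hc i) x).trans ?_⟩
  have hci : c i ≤ ∑ j ∈ Finset.range (k + 1), c j :=
    Finset.single_le_sum (fun j _ => hc0 j) (Finset.mem_range_succ_iff.2 hi)
  have hsum0 := (hc0 i).trans hci
  gcongr

end PeriodicBump

lemma exists_contDiffBump_le_integral {τ : ℝ} (hτ : τ < 1) :
    ∃ b : ContDiffBump (0 : ι → ℝ), b.rOut < 1 / 2 ∧ τ ≤ ∫ x, b x := by
  have hlim : Tendsto (fun r : ℝ => (2 * r) ^ Fintype.card ι) (𝓝[<] (1 / 2)) (𝓝 1) := by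
    have hcont : Continuous fun r : ℝ => (2 * r) ^ Fintype.card ι := by fun_prop
    simpa using (hcont.tendsto (1 / 2)).mono_left nhdsWithin_le_nhds
  obtain ⟨r, hτr, hr0, hr⟩ := ((hlim.eventually_const_lt hτ).and
    (Ioo_mem_nhdsLT (by norm_num : (0 : ℝ) < 1 / 2))).exists
  obtain ⟨R, hrR, hR⟩ := exists_between hr
  let b : ContDiffBump (0 : ι → ℝ) := ⟨r, R, hr0, hrR⟩
  refine ⟨b, hR, hτr.le.trans ?_⟩
  calc (2 * r) ^ Fintype.card ι = volume.real (closedBall (0 : ι → ℝ) r) := by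
        rw [measureReal_def, Real.volume_pi_closedBall _ hr0.le,
          ENNReal.toReal_ofReal (by positivity)]
    _ ≤ ∫ x, b x := b.measure_closedBall_le_integral volume

/-- `f` is a smooth `ℤ^ι`-periodic function whose mean, minimum and maximum over the unit cube are
`mean`, `lo` and `hi`. -/
structure IsPeriodicProfile (f : (ι → ℝ) → ℝ) (mean lo hi : ℝ) : Prop where
  contDiff : ContDiff ℝ (⊤ : ℕ∞) f
  periodic : ∀ (x : ι → ℝ) (m : ι → ℤ), f (x + fun i => (m i : ℝ)) = f x
  setIntegral_eq : ∫ x in Icc 0 1, f x = mean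
  isLeast : IsLeast (f '' Icc 0 1) lo
  isGreatest : IsGreatest (f '' Icc 0 1) hi

lemma antitone_const_sub_smul {A : ℝ} (hA : 0 ≤ A) (c : ℝ) : Antitone fun y : ℝ => c - A • y :=
  fun _ _ hyz => sub_le_sub_left (smul_le_smul_of_nonneg_left hyz hA) c

lemma IsPeriodicProfile.const_sub_smul {f : (ι → ℝ) → ℝ} {mean lo hi A : ℝ}
    (hf : IsPeriodicProfile f mean lo hi) (hA : 0 ≤ A) (c : ℝ) :
    IsPeriodicProfile (fun x => c - A • f x) (c - A * mean) (c - A * hi) (c - A * lo) where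
  contDiff := contDiff_const.sub (hf.contDiff.const_smul A)
  periodic x m := by rw [hf.periodic]
  setIntegral_eq := by
    have hint : IntegrableOn f (Icc 0 1) :=
      hf.contDiff.continuous.continuousOn.integrableOn_compact isCompact_Icc
    have hconst : IntegrableOn (fun _ : ι → ℝ => c) (Icc 0 1) :=
      continuousOn_const.integrableOn_compact isCompact_Icc
    have hvol : volume.real (Icc (0 : ι → ℝ) 1) = 1 := by
      simp [measureReal_def, Real.volume_Icc_pi]
    rw [integral_sub hconst (hint.fun_smul A), integral_smul, hf.setIntegral_eq, setIntegral_const,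
      hvol, one_smul, smul_eq_mul]
  isLeast := by
    rw [← image_image (fun y => c - A • y) f]
    exact (antitone_const_sub_smul hA c).map_isGreatest hf.isGreatest
  isGreatest := by
    rw [← image_image (fun y => c - A • y) f]
    exact (antitone_const_sub_smul hA c).map_isLeast hf.isLeast

lemma isPeriodicProfile_periodicBump [Nonempty ι] {b : ContDiffBump (0 : ι → ℝ)} {l : ℝ}
    (hb : b.rOut < 1 / 2) (hl : 1 ≤ l) :
    IsPeriodicProfile (periodicBump b l) ((∫ x, b x) / l ^ Fintype.card ι) 0 1 where
  contDiff := contDiff_periodicBump b hb hl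
  periodic := periodization_add_intCast _
  setIntegral_eq := setIntegral_periodicBump b hb.le hl
  isLeast := ⟨⟨0, ⟨le_rfl, zero_le_one⟩, periodicBump_zero b hb hl⟩,
    forall_mem_image.2 fun _ _ => b.nonneg⟩
  isGreatest := ⟨⟨fun _ => 1 / 2, ⟨fun _ => by norm_num, fun _ => by norm_num⟩,
    periodicBump_center b⟩, forall_mem_image.2 fun _ _ => b.le_one⟩

lemma exists_isPeriodicProfile_zero_one [Nonempty ι] {τ : ℝ} (hτ : τ < 1) :
    ∃ C : ℕ → ℝ, (∀ k, 0 ≤ C k) ∧ ∀ t, 0 < t → t ≤ τ → ∃ φ : (ι → ℝ) → ℝ,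
      IsPeriodicProfile φ t 0 1 ∧
      ∀ k, ∀ i ≤ k, ∀ x, ‖iteratedFDeriv ℝ i φ x‖ ≤ C k * t⁻¹ ^ ((k : ℝ) / Fintype.card ι) := by
  obtain ⟨b, hb, hτb⟩ := exists_contDiffBump_le_integral (ι := ι) hτ
  choose C hC0 hC using exists_forall_le_norm_iteratedFDeriv_periodicBump_le b hb
  set I := ∫ x, b x
  have hI : 0 < I := b.integral_pos
  set d := Fintype.card ι
  have hd : d ≠ 0 := Fintype.card_ne_zero
  refine ⟨fun k => C k * I ^ ((k : ℝ) / d), fun k => mul_nonneg (hC0 k) (by positivity),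
    fun t ht htτ => ?_⟩
  have hIt : 1 ≤ I / t := (one_le_div ht).2 (htτ.trans hτb)
  have hl : 1 ≤ (I / t) ^ (d : ℝ)⁻¹ := Real.one_le_rpow hIt (by positivity)
  refine ⟨periodicBump b ((I / t) ^ (d : ℝ)⁻¹), ?_, fun k i hi x => (hC k _ hl i hi x).trans_eq ?_⟩
  · have hmean : I / ((I / t) ^ (d : ℝ)⁻¹) ^ d = t := by
      rw [Real.rpow_inv_natCast_pow (by positivity) hd, div_div_cancel₀ hI.ne']
    convert isPeriodicProfile_periodicBump hb hl using 1
    exact hmean.symm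
  · rw [← Real.rpow_mul_natCast (by positivity), inv_mul_eq_div, div_eq_mul_inv I,
      Real.mul_rpow hI.le (by positivity), mul_assoc]

lemma norm_iteratedFDeriv_const_sub_smul_le {E F : Type*} [NormedAddCommGroup E]
    [NormedSpace ℝ E] [NormedAddCommGroup F] [NormedSpace ℝ F] {k : ℕ} {g : E → F} {x : E}
    (hg : ContDiffAt ℝ k g x) (c : F) (A : ℝ) :
    ‖iteratedFDeriv ℝ k (fun y => c - A • g y) x‖ ≤ ‖c‖ + |A| * ‖iteratedFDeriv ℝ k g x‖ := by
  have hconst : ‖iteratedFDeriv ℝ k (fun _ : E => c) x‖ ≤ ‖c‖ := by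
    rcases eq_or_ne k 0 with rfl | hk
    · rw [norm_iteratedFDeriv_zero]
    · simp [iteratedFDeriv_const_of_ne hk]
  rw [fun_iteratedFDeriv_sub_apply contDiffAt_const (hg.const_smul A),
    iteratedFDeriv_const_smul_apply' hg, ← Real.norm_eq_abs, ← norm_smul]
  exact (norm_sub_le _ _).trans (by gcongr)

theorem exists_isPeriodicProfile_mean_zero [Nonempty ι] {τ : ℝ} (hτ : τ < 1) :
    ∃ C : ℕ → ℝ, (∀ k, 0 < C k) ∧ ∀ a b, 0 < a → 0 < b → b ≤ τ * (a + b) →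
      ∃ f : (ι → ℝ) → ℝ, IsPeriodicProfile f 0 (-a) b ∧ ∀ k, ∀ i ≤ k, ∀ x,
        ‖iteratedFDeriv ℝ i f x‖ ≤
          C k * ((a + b) * ((a + b) / b) ^ ((k : ℝ) / Fintype.card ι)) := by
  obtain ⟨C, hC0, hC⟩ := exists_isPeriodicProfile_zero_one (ι := ι) hτ
  refine ⟨fun k => 1 + C k, fun k => add_pos_of_pos_of_nonneg one_pos (hC0 k),
    fun a b ha hb hτb => ?_⟩
  have hab : 0 < a + b := add_pos ha hb
  obtain ⟨φ, hφ, hφC⟩ := hC (b / (a + b)) (div_pos hb hab) ((div_le_iff₀ hab).2 hτb)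
  refine ⟨fun x => b - (a + b) • φ x, ?_, fun k i hi x => ?_⟩
  · convert hφ.const_sub_smul hab.le b using 1
    · rw [mul_div_cancel₀ _ hab.ne', sub_self]
    · ring
    · ring
  · set L := ((a + b) / b) ^ ((k : ℝ) / Fintype.card ι)
    have hL : 1 ≤ L :=
      Real.one_le_rpow ((one_le_div hb).2 (by linarith)) (by positivity)
    have hφi : ‖iteratedFDeriv ℝ i φ x‖ ≤ C k * L := by simpa only [inv_div] using hφC k i hi x
    have hφs : ContDiffAt ℝ i φ x := hφ.contDiff.contDiffAt.of_le (by exact_mod_cast le_top)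
    calc _ ≤ ‖b‖ + |a + b| * ‖iteratedFDeriv ℝ i φ x‖ :=
          norm_iteratedFDeriv_const_sub_smul_le hφs b (a + b)
      _ ≤ (a + b) * L + (a + b) * (C k * L) := by
          rw [Real.norm_of_nonneg hb.le, abs_of_pos hab]
          gcongr
          nlinarith
      _ = (1 + C k) * ((a + b) * L) := by ring

end Bumps

lemma rescaling_cost_le {Δ n p q : ℝ} (hΔ : 0 ≤ Δ) (hn : 1 ≤ n) (hp : 0 ≤ p) (hpq : p ≤ q) :
    (Δ + 1 / n) * ((Δ + 1 / n) / (3 / (4 * n))) ^ p ≤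
      (Δ + 1) * (4 / 3 * (Δ + 1)) ^ q * n ^ q := by
  have hn0 : 0 < n := by linarith
  have hbase : 1 ≤ 4 / 3 * (Δ + 1) * n := by nlinarith
  have hratio : (Δ + 1 / n) / (3 / (4 * n)) ≤ 4 / 3 * (Δ + 1) * n := by
    have : (Δ + 1 / n) / (3 / (4 * n)) = 4 / 3 * (Δ * n + 1) := by field_simp
    rw [this]
    linarith
  have hamp : Δ + 1 / n ≤ Δ + 1 := by
    gcongr
    exact (div_le_one hn0).2 hn
  calc _ ≤ (Δ + 1) * (4 / 3 * (Δ + 1) * n) ^ p := by gcongr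
    _ ≤ (Δ + 1) * (4 / 3 * (Δ + 1) * n) ^ q := by gcongr
    _ = _ := by rw [Real.mul_rpow (by positivity) hn0.le, mul_assoc]

theorem smooth_bump_sequence (d : ℕ) (hd : 1 ≤ d) (Δ : ℝ) (hΔ : 0 < Δ) :
    ∃ f : ℕ → (Fin d → ℝ) → ℝ,
      (∀ n : ℕ, 1 ≤ n →
        ContDiff ℝ (⊤ : ℕ∞) (f n) ∧ ZdPeriodic (f n) ∧
        -- zero average over [0,1]^d
        (∫ x in Set.Icc (0 : Fin d → ℝ) 1, f n x) = 0 ∧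
        -- min over [0,1]^d equals −(Δ + 1/(4n))
        (∀ x ∈ Set.Icc (0 : Fin d → ℝ) 1, -(Δ + 1 / (4 * (n : ℝ))) ≤ f n x) ∧
        (∃ x ∈ Set.Icc (0 : Fin d → ℝ) 1, f n x = -(Δ + 1 / (4 * (n : ℝ)))) ∧
        -- max over [0,1]^d equals 3/(4n)
        (∀ x ∈ Set.Icc (0 : Fin d → ℝ) 1, f n x ≤ 3 / (4 * (n : ℝ))) ∧
        (∃ x ∈ Set.Icc (0 : Fin d → ℝ) 1, f n x = 3 / (4 * (n : ℝ)))) ∧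
      -- C^k bounds: ‖f n‖_{C^k} ≤ C·n^{(k+1)/d}
      (∀ k : ℕ, ∃ C : ℝ, 0 < C ∧ ∀ n : ℕ, 1 ≤ n → ∀ i ≤ k, ∀ x : Fin d → ℝ,
        ‖iteratedFDeriv ℝ i (f n) x‖ ≤ C * (n : ℝ) ^ (((k : ℝ) + 1) / (d : ℝ))) := by
  have : Nonempty (Fin d) := ⟨⟨0, hd⟩⟩
  obtain ⟨C, hC0, hC⟩ := exists_isPeriodicProfile_mean_zero (ι := Fin d) (τ := 3 / 4) (by norm_num)
  have hsum : ∀ n : ℕ, Δ + 1 / (4 * (n : ℝ)) + 3 / (4 * n) = Δ + 1 / n := fun n => by ring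
  have hf : ∀ n : ℕ, 1 ≤ n → _ := fun n hn =>
    have : (0 : ℝ) < n := by exact_mod_cast hn
    hC (Δ + 1 / (4 * n)) (3 / (4 * n)) (by positivity) (by positivity) <| by
      rw [hsum]
      have hb : 3 / (4 * (n : ℝ)) = 3 / 4 * (1 / n) := by ring
      linarith
  choose! f hprof hbound using hf
  refine ⟨f, fun n hn => ?_, fun k => ?_⟩
  · obtain ⟨hsmooth, hper, hint, ⟨hmin, hle⟩, hmax, hge⟩ := hprof n hn
    exact ⟨hsmooth, hper, hint, Set.forall_mem_image.1 hle, hmin, Set.forall_mem_image.1 hge, hmax⟩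
  · refine ⟨C k * ((Δ + 1) * (4 / 3 * (Δ + 1)) ^ (((k : ℝ) + 1) / d)),
      mul_pos (hC0 k) (by positivity), fun n hn i hi x => (hbound n hn k i hi x).trans ?_⟩
    rw [hsum, Fintype.card_fin, mul_assoc (C k)]
    exact mul_le_mul_of_nonneg_left (rescaling_cost_le hΔ.le (by exact_mod_cast hn)
      (by positivity) (by gcongr; exact (lt_add_one _).le)) (hC0 k).le
end
end

section
/- Let d≥1, λ∈(0,1), β∈ℝ^d, and let Φ:ℝ^d→ℝ be C² and ℤ^d-periodic. Define T(x) := (1/d)·tr(D²Φ(x)), and set M := max_{x∈[0,1]^d} T(x), m := min_{x∈[0,1]^d} T(x). If the perturbed map F^♭_{λ,β}(x,y)=(x+λ(β+y+DΦ(x)), λ(y+DΦ(x))) admits a C⁰-invariant Lagrangian graph, then m > −(1+λ)/λ and (1 + λm/(1+λ))⁻¹ ≤ max{ (1+λ)/2 + λM/2 + ((1−λ)²/4 + λ²M²/4 + (1+λ)λM/2)^{1/2}, (1/(2λ))·(1+λ+λM+((1+λ+λM)²−4λ)^{1/2}) }. -/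
noncomputable section

open Real

/-- The second partial derivative `∂²f/∂x_i∂x_j`. -/
def secondPartial {d : ℕ} (f : (Fin d → ℝ) → ℝ) (x : Fin d → ℝ) (i j : Fin d) : ℝ :=
  fderiv ℝ (fun y => fderiv ℝ f y (Pi.single j 1)) x (Pi.single i 1)

/-- `F` admits a `C⁰`-invariant Lagrangian graph `L = {(x, Ψ x)}`, where
`Ψ = c + Dη` for a constant vector `c` and a `C¹` `ℤ^d`-periodic function `η`. -/
def HasInvLagGraph {d : ℕ} (F : (Fin d → ℝ) × (Fin d → ℝ) → (Fin d → ℝ) × (Fin d → ℝ)) : Prop :=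
  ∃ (c : Fin d → ℝ) (η : (Fin d → ℝ) → ℝ), ContDiff ℝ 1 η ∧ ZdPeriodic η ∧
    F '' {p | p.2 = c + gradVec η p.1} = {p | p.2 = c + gradVec η p.1}

/-!
An invariant graph makes `x ↦ x + λ(β + Ψ x + DΦ x)` a bijection of `ℝ^d` with inverse
`x ↦ x - Ψ x - λβ`. Both maps are gradients, `Du` and `Dv`, of coercive functions, and a coercive
function with injective gradient is convex. Moreover `Du + λ Dv = (1 + λ) x + λ DΦ + const`.

The right-hand side is Lipschitz, so by convexity `Du` and `Dv` are Lipschitz too, and hence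
differentiable on a dense set `E` invariant under both. There the Jacobians `D²u(x)` and
`D²v(Du(x))` are positive semidefinite and inverse to each other, so the product of their traces is
at least `d²`. Put `p = tr D²u / d` and `q = λ tr D²v / d`. On `E`,
`p + q = 1 + λ + λT ≤ K` with `K = 1 + λ + λM`, and `λ ≤ p(x) q(Du(x))`. Hence `s = sup q` satisfies
`s + λ / s ≤ K`, so `q ≤ Λ`, the larger root of `X² - K X + λ`, and symmetrically `p ≤ Λ`.
Consequently `p, q ≥ λ / Λ`, which gives `1 + λ + λT ≥ 2λ / Λ` on `E`, and everywhere by continuity.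

This bounds `(1 + λT / (1 + λ))⁻¹` by the average of `Λ` and `Λ / λ`, the two terms of the maximum.
-/

section UpperRoot

/-- The larger root of `X² - K X + μ`, meaningful when `4 μ ≤ K²`. -/
def upperRoot (K μ : ℝ) : ℝ := (K + √(K ^ 2 - 4 * μ)) / 2

lemma upperRoot_pos {K : ℝ} (hK : 0 < K) (μ : ℝ) : 0 < upperRoot K μ :=
  half_pos (add_pos_of_pos_of_nonneg hK (sqrt_nonneg _))

lemma le_upperRoot_of_sq_add_le {K μ s : ℝ} (h : s ^ 2 + μ ≤ K * s) : s ≤ upperRoot K μ := by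
  have : 2 * s - K ≤ √(K ^ 2 - 4 * μ) := le_sqrt_of_sq_le (by linarith)
  unfold upperRoot
  linarith

lemma le_upperRoot_of_forall_exists_add_div_le {S : Set ℝ} {K μ : ℝ} (hμ : 0 < μ)
    (hpos : ∀ s ∈ S, 0 < s) (hS : ∀ s ∈ S, ∃ t ∈ S, s + μ / t ≤ K) {s : ℝ} (hs : s ∈ S) :
    s ≤ upperRoot K μ := by
  have hbdd : BddAbove S := ⟨K, fun s hs => by
    obtain ⟨t, ht, hst⟩ := hS s hs
    linarith [div_pos hμ (hpos t ht)]⟩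
  have hle : ∀ t ∈ S, t ≤ sSup S := fun t ht => le_csSup hbdd ht
  have hsup : 0 < sSup S := (hpos s hs).trans_le (hle s hs)
  have hself : sSup S ≤ K - μ / sSup S := csSup_le ⟨s, hs⟩ fun r hr => by
    obtain ⟨t, ht, hrt⟩ := hS r hr
    linarith [div_le_div_of_nonneg_left hμ.le (hpos t ht) (hle t ht)]
  refine (hle s hs).trans (le_upperRoot_of_sq_add_le ?_)
  rw [le_sub_iff_add_le] at hself
  have := mul_le_mul_of_nonneg_right hself hsup.le
  rwa [add_mul, div_mul_cancel₀ _ hsup.ne', ← sq] at this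

variable {X : Type*} {E : Set X} {f g : X → X} {p q : X → ℝ} {K μ : ℝ}

lemma div_upperRoot_le_of_mapsTo (hμ : 0 < μ) (hf : Set.MapsTo f E E) (hq : ∀ x ∈ E, 0 < q x)
    (hpq : ∀ x ∈ E, p x + q x ≤ K) (hμpq : ∀ x ∈ E, μ ≤ p x * q (f x)) {x : X} (hx : x ∈ E) :
    μ / upperRoot K μ ≤ p x := by
  have hp : ∀ y ∈ E, μ / q (f y) ≤ p y := fun y hy => (div_le_iff₀ (hq _ (hf hy))).2 (hμpq y hy)
  have hroot : q (f x) ≤ upperRoot K μ := by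
    refine le_upperRoot_of_forall_exists_add_div_le (S := q '' E) hμ ?_ ?_ ⟨_, hf hx, rfl⟩
    · rintro _ ⟨y, hy, rfl⟩
      exact hq y hy
    · rintro _ ⟨y, hy, rfl⟩
      exact ⟨_, ⟨_, hf hy, rfl⟩, by linarith [hpq y hy, hp y hy]⟩
  exact (div_le_div_of_nonneg_left hμ.le (hq _ (hf hx)) hroot).trans (hp x hx)

lemma two_mul_div_upperRoot_le_add_of_mapsTo (hμ : 0 < μ) (hf : Set.MapsTo f E E)
    (hg : Set.MapsTo g E E) (hfg : Function.RightInverse g f) (hp : ∀ x ∈ E, 0 ≤ p x)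
    (hpq : ∀ x ∈ E, p x + q x ≤ K) (hμpq : ∀ x ∈ E, μ ≤ p x * q (f x)) {x : X} (hx : x ∈ E) :
    0 < K ∧ 2 * μ / upperRoot K μ ≤ p x + q x := by
  have hμqp : ∀ y ∈ E, μ ≤ q y * p (g y) := fun y hy => by
    have := hμpq _ (hg hy)
    rwa [hfg y, mul_comm] at this
  have hq₀ : ∀ y ∈ E, 0 < q y := fun y hy =>
    pos_of_mul_pos_left (hμ.trans_le (hμqp y hy)) (hp _ (hg hy))
  have hp₀ : ∀ y ∈ E, 0 < p y := fun y hy =>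
    pos_of_mul_pos_left (hμ.trans_le (hμpq y hy)) (hq₀ _ (hf hy)).le
  have hpx := div_upperRoot_le_of_mapsTo hμ hf hq₀ hpq hμpq hx
  have hqx := div_upperRoot_le_of_mapsTo hμ hg hp₀
    (fun y hy => (add_comm _ _).trans_le (hpq y hy)) hμqp hx
  rw [two_mul, add_div]
  exact ⟨(add_pos (hp₀ x hx) (hq₀ x hx)).trans_le (hpq x hx), add_le_add hpx hqx⟩

end UpperRoot

section Bregman

open Filter Metric
open scoped NNReal

variable {E F : Type*} [NormedAddCommGroup E] [NormedSpace ℝ E] [NormedAddCommGroup F]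
  [NormedSpace ℝ F]

/-- The Bregman divergence of `u`: the error at `y` of its first-order expansion at `x`. A
differentiable function is convex precisely when its Bregman divergence is nonnegative, and this
is how convexity is expressed below. -/
def bregmanDiv (u : E → ℝ) (x y : E) : ℝ := u y - u x - fderiv ℝ u x (y - x)

variable {u v : E → ℝ}

lemma bregmanDiv_add (hu : Differentiable ℝ u) (hv : Differentiable ℝ v) (x y : E) :
    bregmanDiv (fun z => u z + v z) x y = bregmanDiv u x y + bregmanDiv v x y := by
  simp only [bregmanDiv, fderiv_fun_add (hu x) (hv x), add_apply]
  ring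

lemma bregmanDiv_const_mul (hv : Differentiable ℝ v) (r : ℝ) (x y : E) :
    bregmanDiv (fun z => r * v z) x y = r * bregmanDiv v x y := by
  simp only [bregmanDiv, fderiv_const_mul (hv x), smul_apply, smul_eq_mul]
  ring

/- For fixed `x`, the function `u - Du(x)` attains its minimum at a critical point, and `x` is its
only critical point. -/
lemma bregmanDiv_nonneg_of_injective_fderiv (hu : Differentiable ℝ u)
    (hinj : Function.Injective (fderiv ℝ u))
    (hcoer : ∀ L : E →L[ℝ] ℝ, Tendsto (fun x => u x - L x) (cocompact E) atTop) (x y : E) :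
    0 ≤ bregmanDiv u x y := by
  set L := fderiv ℝ u x
  obtain ⟨z, hz⟩ := Continuous.exists_forall_le (hu.continuous.sub L.continuous) (hcoer L)
  have hcrit : fderiv ℝ u z - L = 0 :=
    IsLocalMin.hasFDerivAt_eq_zero (Eventually.of_forall hz)
      ((hu z).hasFDerivAt.sub L.hasFDerivAt)
  obtain rfl : z = x := hinj (sub_eq_zero.1 hcrit)
  have hmin : u z - L z ≤ u y - L y := hz y
  rw [bregmanDiv, map_sub]
  linarith

lemma bregmanDiv_le_of_lipschitzWith_fderiv {K : ℝ≥0} (hu : Differentiable ℝ u)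
    (hK : LipschitzWith K (fderiv ℝ u)) (x y : E) : bregmanDiv u x y ≤ K * ‖y - x‖ ^ 2 := by
  have hbound : ∀ z ∈ closedBall x ‖y - x‖, ‖fderiv ℝ u z - fderiv ℝ u x‖ ≤ K * ‖y - x‖ :=
    fun z hz => (hK.norm_sub_le z x).trans
      (mul_le_mul_of_nonneg_left (mem_closedBall_iff_norm.1 hz) K.2)
  have := (convex_closedBall x ‖y - x‖).norm_image_sub_le_of_norm_fderiv_le' (fun z _ => hu z)
    hbound (mem_closedBall_self (norm_nonneg _)) (mem_closedBall_iff_norm.2 le_rfl)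
  rw [sq, ← mul_assoc]
  exact (le_abs_self _).trans this

lemma sub_fderiv_apply_le_of_bregmanDiv {C : ℝ} (hpos : ∀ x y, 0 ≤ bregmanDiv u x y)
    (hle : ∀ x y, bregmanDiv u x y ≤ C * ‖y - x‖ ^ 2) (x y e : E) :
    (fderiv ℝ u y - fderiv ℝ u x) e ≤ C * ‖y + e - x‖ ^ 2 := by
  have hcocycle : (fderiv ℝ u y - fderiv ℝ u x) e =
      bregmanDiv u x (y + e) - bregmanDiv u x y - bregmanDiv u y (y + e) := by
    simp only [bregmanDiv, sub_apply, map_sub, map_add]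
    ring
  linarith [hpos x y, hpos y (y + e), hle x (y + e)]

lemma lipschitzWith_fderiv_of_bregmanDiv {C : ℝ≥0} (hpos : ∀ x y, 0 ≤ bregmanDiv u x y)
    (hle : ∀ x y, bregmanDiv u x y ≤ C * ‖y - x‖ ^ 2) : LipschitzWith (4 * C) (fderiv ℝ u) := by
  refine LipschitzWith.of_dist_le_mul fun y x => ?_
  rcases eq_or_ne y x with rfl | hne
  · simp
  rw [dist_eq_norm, dist_eq_norm]
  set r := ‖y - x‖
  have hr : 0 < r := norm_sub_pos_iff.2 hne
  have hone : ∀ e : E, ‖e‖ ≤ r → (fderiv ℝ u y - fderiv ℝ u x) e ≤ C * (2 * r) ^ 2 := by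
    intro e he
    refine (sub_fderiv_apply_le_of_bregmanDiv hpos hle x y e).trans ?_
    gcongr
    rw [add_sub_right_comm]
    linarith [norm_add_le (y - x) e]
  have hball : ‖fderiv ℝ u y - fderiv ℝ u x‖ ≤ C * (2 * r) ^ 2 / r := by
    refine ContinuousLinearMap.opNorm_bound_of_ball_bound hr _ _ fun e he => ?_
    rw [mem_closedBall_zero_iff] at he
    have hneg := hone (-e) (by rwa [norm_neg])
    rw [map_neg] at hneg
    exact abs_le.2 ⟨by linarith, hone e he⟩
  refine hball.trans_eq ?_
  push_cast
  field_simp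
  ring

lemma lipschitzWith_fderiv_of_lipschitzWith_add {K : ℝ≥0} (hu : Differentiable ℝ u)
    (hv : Differentiable ℝ v) (hu₀ : ∀ x y, 0 ≤ bregmanDiv u x y)
    (hv₀ : ∀ x y, 0 ≤ bregmanDiv v x y)
    (hK : LipschitzWith K fun x => fderiv ℝ u x + fderiv ℝ v x) :
    LipschitzWith (4 * K) (fderiv ℝ u) := by
  refine lipschitzWith_fderiv_of_bregmanDiv hu₀ fun x y => ?_
  rw [← funext fun x => fderiv_fun_add (hu x) (hv x)] at hK
  have := bregmanDiv_le_of_lipschitzWith_fderiv (hu.fun_add hv) hK x y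
  rw [bregmanDiv_add hu hv] at this
  linarith [hv₀ x y]

lemma fderiv_fderiv_apply_self_nonneg (hu₀ : ∀ x y, 0 ≤ bregmanDiv u x y) {x : E}
    (hx : DifferentiableAt ℝ (fderiv ℝ u) x) (w : E) : 0 ≤ fderiv ℝ (fderiv ℝ u) x w w := by
  have hmono : ∀ y z, 0 ≤ (fderiv ℝ u y - fderiv ℝ u z) (y - z) := fun y z => by
    have h₁ := hu₀ y z
    have h₂ := hu₀ z y
    simp only [bregmanDiv, sub_apply, map_sub] at h₁ h₂ ⊢
    linarith
  have hlim := ((ContinuousLinearMap.apply ℝ ℝ w).continuous.tendsto _).comp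
    (hx.hasFDerivAt.hasLineDerivAt w).tendsto_slope_zero_right
  refine ge_of_tendsto hlim (eventually_mem_nhdsWithin.mono fun t (ht : 0 < t) => ?_)
  have := hmono (x + t • w) x
  rw [add_sub_cancel_left, map_smul, smul_eq_mul] at this
  exact mul_nonneg (inv_nonneg.2 ht.le) (nonneg_of_mul_nonneg_right this ht)

lemma antilipschitzWith_fderiv {f : E → F} {K : ℝ≥0} (hf : AntilipschitzWith K f) {x : E}
    (hx : DifferentiableAt ℝ f x) : AntilipschitzWith K (fderiv ℝ f x) := by
  refine AntilipschitzWith.of_le_mul_dist fun a b => ?_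
  rw [dist_eq_norm, dist_eq_norm, ← map_sub]
  have hlim := (hx.hasFDerivAt.hasLineDerivAt (a - b)).tendsto_slope_zero.norm.const_mul (K : ℝ)
  refine ge_of_tendsto hlim (eventually_mem_nhdsWithin.mono fun t (ht : t ≠ 0) => ?_)
  have := hf.le_mul_dist (x + t • (a - b)) x
  rw [dist_eq_norm, dist_eq_norm, add_sub_cancel_left, norm_smul] at this
  rw [norm_smul, norm_inv, mul_left_comm, inv_mul_eq_div, le_div_iff₀ (norm_pos_iff.2 ht)]
  linarith

lemma differentiableAt_of_rightInverse_of_lipschitzWith [FiniteDimensional ℝ F] {f : E → F}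
    {g : F → E} {K : ℝ≥0} (hg : LipschitzWith K g) (hgf : Function.LeftInverse g f)
    (hfg : Function.RightInverse g f) {x : E} (hx : DifferentiableAt ℝ f x) :
    DifferentiableAt ℝ g (f x) := by
  have hinj : Function.Injective (fderiv ℝ f x) :=
    (antilipschitzWith_fderiv (hg.to_rightInverse hgf) hx).injective
  obtain ⟨A, hA⟩ := (fderiv ℝ f x : E →ₗ[ℝ] F).exists_leftInverse_of_injective
    (LinearMap.ker_eq_bot.2 hinj)
  have hfx : HasFDerivAt f (fderiv ℝ f x) (g (f x)) := by
    rw [hgf x]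
    exact hx.hasFDerivAt
  exact (hfx.of_comp_of_leftInverse (f'symm := A.toContinuousLinearMap) hg.continuous.continuousAt
    (hasFDerivAt_id _) (Eventually.of_forall hfg) (LinearMap.congr_fun hA)).differentiableAt

end Bregman

section Periodicity

variable {d : ℕ} {α : Type*} {E : Type*} [NormedAddCommGroup E]

/-- `ℤ^d`-periodicity of a map on `ℝ^d` with values in an arbitrary type. For real-valued maps it
is definitionally `ZdPeriodic`. -/
def LatticePeriodic (g : (Fin d → ℝ) → α) : Prop :=
  ∀ (x : Fin d → ℝ) (n : Fin d → ℤ), g (x + fun i => (n i : ℝ)) = g x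

namespace LatticePeriodic

lemma exists_mem_Icc_eq {g : (Fin d → ℝ) → α} (hg : LatticePeriodic g) (x : Fin d → ℝ) :
    ∃ y ∈ Set.Icc (0 : Fin d → ℝ) 1, g y = g x := by
  refine ⟨_, ⟨fun i => ?_, fun i => ?_⟩, hg x fun i => -⌊x i⌋⟩
  · simpa using Int.floor_le (x i)
  · simpa [add_comm] using (Int.lt_floor_add_one (x i)).le

lemma exists_norm_le {g : (Fin d → ℝ) → E} (hper : LatticePeriodic g) (hg : Continuous g) :
    ∃ C, ∀ x, ‖g x‖ ≤ C := by
  obtain ⟨C, hC⟩ := (isCompact_Icc (a := (0 : Fin d → ℝ)) (b := 1)).exists_bound_of_continuousOn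
    hg.continuousOn
  refine ⟨C, fun x => ?_⟩
  obtain ⟨y, hy, hyx⟩ := hper.exists_mem_Icc_eq x
  exact hyx ▸ hC y hy

variable [NormedSpace ℝ E] {g : (Fin d → ℝ) → E}

protected lemma fderiv (hper : LatticePeriodic g) : LatticePeriodic (fderiv ℝ g) := fun x n => by
  rw [← fderiv_comp_add_right]
  exact congrArg (fderiv ℝ · x) (funext fun y => hper y n)

lemma exists_lipschitzWith (hper : LatticePeriodic g) (hg : ContDiff ℝ 1 g) :
    ∃ K, LipschitzWith K g := by
  obtain ⟨C, hC⟩ := hper.fderiv.exists_norm_le (hg.continuous_fderiv one_ne_zero)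
  exact ⟨C.toNNReal, lipschitzWith_of_nnnorm_fderiv_le (hg.differentiable one_ne_zero)
    fun x => NNReal.le_toNNReal_of_coe_le (hC x)⟩

end LatticePeriodic

end Periodicity

section Gradient

open Filter Matrix

variable {d : ℕ} {u h : (Fin d → ℝ) → ℝ} {ℓ : Fin d → ℝ}

/-- The identification of `ℝ^d` with its dual through the dot product. It is not isometric, since
`Fin d → ℝ` carries the sup norm. -/
def dotDual (d : ℕ) : (Fin d → ℝ) ≃L[ℝ] ((Fin d → ℝ) →L[ℝ] ℝ) :=
  ((dotProductEquiv ℝ (Fin d)).trans LinearMap.toContinuousLinearMap).toContinuousLinearEquiv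

lemma dotDual_apply (v w : Fin d → ℝ) : dotDual d v w = v ⬝ᵥ w := rfl

lemma gradVec_eq_dotDual_symm (u : (Fin d → ℝ) → ℝ) :
    gradVec u = (dotDual d).symm ∘ fderiv ℝ u := by
  funext x
  refine ((dotDual d).symm_apply_eq.2 ?_).symm
  refine ContinuousLinearMap.coe_injective (LinearMap.pi_ext' fun i => LinearMap.ext_ring ?_)
  simp [dotDual_apply, gradVec]

lemma fderiv_eq_dotDual (u : (Fin d → ℝ) → ℝ) : fderiv ℝ u = dotDual d ∘ gradVec u := by
  rw [gradVec_eq_dotDual_symm, ← Function.comp_assoc, ContinuousLinearEquiv.self_comp_symm,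
    Function.id_comp]

lemma gradVec_eq_of_hasFDerivAt {G x : Fin d → ℝ} (hG : HasFDerivAt u (dotDual d G) x) :
    gradVec u x = G := by
  rw [gradVec_eq_dotDual_symm, Function.comp_apply, hG.fderiv,
    ContinuousLinearEquiv.symm_apply_apply]

lemma contDiff_gradVec {m n : WithTop ℕ∞} (hu : ContDiff ℝ n u) (hmn : m + 1 ≤ n) :
    ContDiff ℝ m (gradVec u) := by
  rw [gradVec_eq_dotDual_symm]
  exact (dotDual d).symm.contDiff.comp (hu.fderiv_right hmn)

lemma latticePeriodic_gradVec (hu : LatticePeriodic u) : LatticePeriodic (gradVec u) :=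
  fun x n => by
    rw [gradVec_eq_dotDual_symm, Function.comp_apply, hu.fderiv x n, Function.comp_apply]

lemma gradVec_neg (u : (Fin d → ℝ) → ℝ) (x : Fin d → ℝ) :
    gradVec (fun y => -u y) x = -gradVec u x := by
  simp only [gradVec_eq_dotDual_symm, Function.comp_apply, fderiv_fun_neg, map_neg]

lemma gradVec_const_mul_add {v : (Fin d → ℝ) → ℝ} (hu : Differentiable ℝ u)
    (hv : Differentiable ℝ v) (r : ℝ) (x : Fin d → ℝ) :
    gradVec (fun y => r * (u y + v y)) x = r • (gradVec u x + gradVec v x) := by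
  simp only [gradVec_eq_dotDual_symm, Function.comp_apply,
    fderiv_const_mul ((hu x).fun_add (hv x)), fderiv_fun_add (hu x) (hv x), map_smul, map_add]

lemma norm_sq_le_dotProduct_self (v : Fin d → ℝ) : ‖v‖ ^ 2 ≤ v ⬝ᵥ v := by
  refine (le_sqrt (norm_nonneg v) ?_).1 <| (pi_norm_le_iff_of_nonneg (sqrt_nonneg _)).2
    fun i => abs_le_sqrt ?_
  · simpa using dotProduct_star_self_nonneg v
  · rw [sq]
    exact Finset.single_le_sum (fun j _ => mul_self_nonneg (v j)) (Finset.mem_univ i)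

/-- The perturbation of `|x|² / 2` whose gradient is `id + ℓ + Dh`: the shape of the generating
functions of a dynamical system on the torus, with `h` periodic. -/
def potential (ℓ : Fin d → ℝ) (h : (Fin d → ℝ) → ℝ) (x : Fin d → ℝ) : ℝ :=
  x ⬝ᵥ x / 2 + ℓ ⬝ᵥ x + h x

lemma hasFDerivAt_potential {x : Fin d → ℝ} (hh : DifferentiableAt ℝ h x) :
    HasFDerivAt (potential ℓ h) (dotDual d (x + ℓ + gradVec h x)) x := by
  have hsq : HasFDerivAt (fun y : Fin d → ℝ => y ⬝ᵥ y) (dotDual d x + dotDual d x) x := by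
    refine ((dotDual d).toContinuousLinearMap.hasFDerivAt_of_bilinear
      (hasFDerivAt_id x) (hasFDerivAt_id x)).congr_fderiv (ContinuousLinearMap.ext fun w => ?_)
    simp [dotDual_apply, dotProduct_comm w x]
  refine (((hsq.mul_const (2⁻¹ : ℝ)).add (dotDual d ℓ).hasFDerivAt).add
    hh.hasFDerivAt).congr_fderiv ?_
  rw [fderiv_eq_dotDual, Function.comp_apply, map_add, map_add, ← two_smul ℝ (dotDual d x),
    inv_smul_smul₀ two_ne_zero]

lemma differentiable_potential (hh : Differentiable ℝ h) : Differentiable ℝ (potential ℓ h) :=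
  fun x => (hasFDerivAt_potential (hh x)).differentiableAt

lemma gradVec_potential (hh : Differentiable ℝ h) (x : Fin d → ℝ) :
    gradVec (potential ℓ h) x = x + ℓ + gradVec h x :=
  gradVec_eq_of_hasFDerivAt (hasFDerivAt_potential (hh x))

lemma tendsto_potential_sub_cocompact_atTop {C : ℝ} (hC : ∀ x, C ≤ h x)
    (L : (Fin d → ℝ) →L[ℝ] ℝ) :
    Tendsto (fun x => potential ℓ h x - L x) (cocompact (Fin d → ℝ)) atTop := by
  set A := L - dotDual d ℓ
  have hquad : Tendsto (fun r : ℝ => r * (2⁻¹ * r - ‖A‖) + C) atTop atTop :=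
    tendsto_atTop_add_const_right _ _ (tendsto_id.atTop_mul_atTop₀
      (tendsto_atTop_add_const_right _ _ (tendsto_id.const_mul_atTop (by norm_num))))
  refine tendsto_atTop_mono (fun x => ?_) (hquad.comp tendsto_norm_cocompact_atTop)
  have hAx : L x - ℓ ⬝ᵥ x ≤ ‖A‖ * ‖x‖ := (le_abs_self _).trans (A.le_opNorm x)
  have := norm_sq_le_dotProduct_self x
  simp only [Function.comp_apply, potential]
  linarith [hC x]

lemma bregmanDiv_potential_nonneg {C : ℝ} (hh : Differentiable ℝ h) (hC : ∀ x, C ≤ h x)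
    (hinj : Function.Injective (gradVec (potential ℓ h))) (x y : Fin d → ℝ) :
    0 ≤ bregmanDiv (potential ℓ h) x y := by
  refine bregmanDiv_nonneg_of_injective_fderiv (differentiable_potential hh) ?_
    (tendsto_potential_sub_cocompact_atTop hC) x y
  rw [fderiv_eq_dotDual]
  exact (dotDual d).injective.comp hinj

end Gradient

section Jacobian

open Matrix

lemma card_sq_le_trace_mul_trace {n : Type*} [Fintype n] [DecidableEq n] {A B : Matrix n n ℝ}
    (hA : A.PosSemidef) (hAB : A * B = 1) : (Fintype.card n : ℝ) ^ 2 ≤ A.trace * B.trace := by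
  have hBA : Bᴴ * A = 1 := by
    rw [← hA.isHermitian.eq, ← conjTranspose_mul, hAB, conjTranspose_one]
  have hquad : ∀ t : ℝ, 0 ≤ B.trace * (t * t) + -2 * Fintype.card n * t + A.trace := fun t => by
    have hexpand : (1 - t • B)ᴴ * A * (1 - t • B) = A - (2 * t) • 1 + (t * t) • B := by
      rw [conjTranspose_sub, conjTranspose_one, conjTranspose_smul, star_trivial, sub_mul, one_mul,
        smul_mul, hBA, mul_sub, mul_one, Matrix.mul_smul, sub_mul, hAB, smul_mul, one_mul]
      module
    have := (hA.conjTranspose_mul_mul_same (1 - t • B)).trace_nonneg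
    rw [hexpand, trace_add, trace_sub, trace_smul, trace_smul, trace_one, smul_eq_mul,
      smul_eq_mul] at this
    linarith
  have := discrim_le_zero hquad
  rw [discrim] at this
  linarith

variable {d : ℕ} {f g : (Fin d → ℝ) → Fin d → ℝ} {x : Fin d → ℝ}

/-- The Jacobian matrix of `f` at `x`, or `0` if `f` is not differentiable at `x`. -/
def jacobian (f : (Fin d → ℝ) → Fin d → ℝ) (x : Fin d → ℝ) : Matrix (Fin d) (Fin d) ℝ :=
  LinearMap.toMatrix' (fderiv ℝ f x : (Fin d → ℝ) →ₗ[ℝ] Fin d → ℝ)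

lemma jacobian_add_const_smul (hf : DifferentiableAt ℝ f x) (hg : DifferentiableAt ℝ g x) (r : ℝ) :
    jacobian (fun y => f y + r • g y) x = jacobian f x + r • jacobian g x := by
  simp only [jacobian, fderiv_fun_add hf (hg.fun_const_smul r), fderiv_fun_const_smul hg,
    ContinuousLinearMap.toLinearMap_add, ContinuousLinearMap.toLinearMap_smul, map_add, map_smul]

lemma jacobian_smul_self_add_const (r : ℝ) (b : Fin d → ℝ) :
    jacobian (fun y => r • y + b) x = r • 1 := by
  have hder : HasFDerivAt (fun y => r • y + b) (r • ContinuousLinearMap.id ℝ (Fin d → ℝ)) x :=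
    ((hasFDerivAt_id x).const_smul r).add_const b
  rw [jacobian, hder.fderiv, ContinuousLinearMap.toLinearMap_smul, map_smul,
    ContinuousLinearMap.coe_id, LinearMap.toMatrix'_id]

lemma jacobian_mul_jacobian_of_leftInverse (hgf : Function.LeftInverse g f)
    (hg : DifferentiableAt ℝ g (f x)) (hf : DifferentiableAt ℝ f x) :
    jacobian g (f x) * jacobian f x = 1 := by
  rw [jacobian, jacobian, ← LinearMap.toMatrix'_comp, ← ContinuousLinearMap.toLinearMap_comp,
    ← fderiv_comp x hg hf, hgf.comp_eq_id, fderiv_id, ContinuousLinearMap.coe_id,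
    LinearMap.toMatrix'_id]

lemma continuous_trace_jacobian (hf : ContDiff ℝ 1 f) :
    Continuous fun x => (jacobian f x).trace := by
  have := hf.continuous_fderiv one_ne_zero
  simp only [Matrix.trace, Matrix.diag, jacobian, LinearMap.toMatrix'_apply,
    ContinuousLinearMap.coe_coe]
  fun_prop

lemma posSemidef_jacobian_gradVec {u : (Fin d → ℝ) → ℝ} (hu : Differentiable ℝ u)
    (hu₀ : ∀ x y, 0 ≤ bregmanDiv u x y) (hx : DifferentiableAt ℝ (gradVec u) x) :
    (jacobian (gradVec u) x).PosSemidef := by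
  have hx' : HasFDerivAt (fderiv ℝ u)
      ((dotDual d).toContinuousLinearMap ∘L fderiv ℝ (gradVec u) x) x := by
    rw [fderiv_eq_dotDual u]
    exact (dotDual d).hasFDerivAt.comp x hx.hasFDerivAt
  have happly : ∀ v w, jacobian (gradVec u) x *ᵥ v ⬝ᵥ w = fderiv ℝ (fderiv ℝ u) x v w :=
    fun v w => by
      rw [jacobian, LinearMap.toMatrix'_mulVec, hx'.fderiv]
      rfl
  have hsymm : ∀ v w, fderiv ℝ (fderiv ℝ u) x v w = fderiv ℝ (fderiv ℝ u) x w v :=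
    second_derivative_symmetric (fun y => (hu y).hasFDerivAt) hx'.differentiableAt.hasFDerivAt
  refine .of_dotProduct_mulVec_nonneg ?_ fun v => ?_
  · ext i j
    have := hsymm (Pi.single i 1) (Pi.single j 1)
    rw [← happly, ← happly] at this
    simpa using this
  · rw [star_trivial, dotProduct_comm, happly]
    exact fderiv_fderiv_apply_self_nonneg hu₀ hx'.differentiableAt v

lemma trace_jacobian_gradVec {Φ : (Fin d → ℝ) → ℝ} (hΦ : DifferentiableAt ℝ (gradVec Φ) x) :
    (jacobian (gradVec Φ) x).trace = ∑ i, secondPartial Φ x i i :=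
  Finset.sum_congr rfl fun i _ => by
    rw [Matrix.diag_apply, jacobian, LinearMap.toMatrix'_apply, secondPartial]
    have := (hasFDerivAt_pi'.1 hΦ.hasFDerivAt i).fderiv
    exact (congrArg (fun L : (Fin d → ℝ) →L[ℝ] ℝ => L (Pi.single i 1)) this).symm

end Jacobian

section LegendrePair

variable {d : ℕ} {u v : (Fin d → ℝ) → ℝ} {W : (Fin d → ℝ) → Fin d → ℝ} {μ : ℝ} {x : Fin d → ℝ}

/-- Two convex functions on `ℝ^d` whose gradients are inverse to each other, like a convex
function and its Legendre transform. -/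
structure LegendrePair (u v : (Fin d → ℝ) → ℝ) : Prop where
  differentiable_left : Differentiable ℝ u
  differentiable_right : Differentiable ℝ v
  bregmanDiv_left_nonneg : ∀ x y, 0 ≤ bregmanDiv u x y
  bregmanDiv_right_nonneg : ∀ x y, 0 ≤ bregmanDiv v x y
  leftInverse : Function.LeftInverse (gradVec v) (gradVec u)
  rightInverse : Function.RightInverse (gradVec v) (gradVec u)

lemma legendrePair_potential {ℓ₁ ℓ₂ : Fin d → ℝ} {h₁ h₂ : (Fin d → ℝ) → ℝ}
    (hh₁ : Differentiable ℝ h₁) (hh₂ : Differentiable ℝ h₂) (hper₁ : LatticePeriodic h₁)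
    (hper₂ : LatticePeriodic h₂)
    (hleft : Function.LeftInverse (gradVec (potential ℓ₂ h₂)) (gradVec (potential ℓ₁ h₁)))
    (hright : Function.RightInverse (gradVec (potential ℓ₂ h₂)) (gradVec (potential ℓ₁ h₁))) :
    LegendrePair (potential ℓ₁ h₁) (potential ℓ₂ h₂) := by
  obtain ⟨C₁, hC₁⟩ := hper₁.exists_norm_le hh₁.continuous
  obtain ⟨C₂, hC₂⟩ := hper₂.exists_norm_le hh₂.continuous
  exact ⟨differentiable_potential hh₁, differentiable_potential hh₂,
    bregmanDiv_potential_nonneg hh₁ (fun x => neg_le_of_abs_le (hC₁ x)) hleft.injective,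
    bregmanDiv_potential_nonneg hh₂ (fun x => neg_le_of_abs_le (hC₂ x)) hright.injective,
    hleft, hright⟩

namespace LegendrePair

lemma symm (h : LegendrePair u v) : LegendrePair v u where
  differentiable_left := h.differentiable_right
  differentiable_right := h.differentiable_left
  bregmanDiv_left_nonneg := h.bregmanDiv_right_nonneg
  bregmanDiv_right_nonneg := h.bregmanDiv_left_nonneg
  leftInverse := h.rightInverse
  rightInverse := h.leftInverse

lemma exists_lipschitzWith_left (h : LegendrePair u v) (hμ : 0 < μ)
    (hW : ∃ K, LipschitzWith K W) (hsum : ∀ x, gradVec u x + μ • gradVec v x = W x) :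
    ∃ K, LipschitzWith K (gradVec u) := by
  obtain ⟨K, hK⟩ := hW
  have hadd : (fun x => fderiv ℝ u x + fderiv ℝ (fun y => μ * v y) x) = dotDual d ∘ W := by
    funext x
    rw [fderiv_const_mul (h.differentiable_right x), fderiv_eq_dotDual, fderiv_eq_dotDual,
      Function.comp_apply, Function.comp_apply, Function.comp_apply, ← hsum, map_add, map_smul]
  have hpos : ∀ x y, 0 ≤ bregmanDiv (fun z => μ * v z) x y := fun x y => by
    rw [bregmanDiv_const_mul h.differentiable_right]
    exact mul_nonneg hμ.le (h.bregmanDiv_right_nonneg x y)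
  have hLip := lipschitzWith_fderiv_of_lipschitzWith_add h.differentiable_left
    (h.differentiable_right.const_mul μ) h.bregmanDiv_left_nonneg hpos
    (hadd ▸ (dotDual d).lipschitz.comp hK)
  rw [gradVec_eq_dotDual_symm]
  exact ⟨_, (dotDual d).symm.lipschitz.comp hLip⟩

lemma gradVec_right_add_inv_smul (hμ : 0 < μ)
    (hsum : ∀ x, gradVec u x + μ • gradVec v x = W x) (x : Fin d → ℝ) :
    gradVec v x + μ⁻¹ • gradVec u x = μ⁻¹ • W x := by
  rw [← hsum, smul_add, inv_smul_smul₀ hμ.ne', add_comm]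

lemma exists_lipschitzWith_right (h : LegendrePair u v) (hμ : 0 < μ)
    (hW : ∃ K, LipschitzWith K W) (hsum : ∀ x, gradVec u x + μ • gradVec v x = W x) :
    ∃ K, LipschitzWith K (gradVec v) :=
  let ⟨_, hK⟩ := hW
  h.symm.exists_lipschitzWith_left (inv_pos.2 hμ) ⟨_, (lipschitzWith_smul μ⁻¹).comp hK⟩
    (gradVec_right_add_inv_smul hμ hsum)

lemma differentiableAt_gradVec_right_iff (hμ : 0 < μ) (hW : DifferentiableAt ℝ W x)
    (hsum : ∀ x, gradVec u x + μ • gradVec v x = W x) :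
    DifferentiableAt ℝ (gradVec v) x ↔ DifferentiableAt ℝ (gradVec u) x := by
  constructor <;> intro hx
  · rw [show gradVec u = W - μ • gradVec v from funext fun y => eq_sub_of_add_eq (hsum y)]
    exact hW.sub (hx.const_smul μ)
  · rw [show gradVec v = μ⁻¹ • W - μ⁻¹ • gradVec u from
      funext fun y => eq_sub_of_add_eq (gradVec_right_add_inv_smul hμ hsum y)]
    exact (hW.const_smul _).sub (hx.const_smul _)

lemma mapsTo_gradVec_left (h : LegendrePair u v) (hμ : 0 < μ) (hW : Differentiable ℝ W)
    (hWL : ∃ K, LipschitzWith K W) (hsum : ∀ x, gradVec u x + μ • gradVec v x = W x) :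
    Set.MapsTo (gradVec u) {x | DifferentiableAt ℝ (gradVec u) x}
      {x | DifferentiableAt ℝ (gradVec u) x} := fun _ hx =>
  let ⟨_, hK⟩ := h.exists_lipschitzWith_right hμ hWL hsum
  (differentiableAt_gradVec_right_iff hμ (hW _) hsum).1
    (differentiableAt_of_rightInverse_of_lipschitzWith hK h.leftInverse h.rightInverse hx)

lemma mapsTo_gradVec_right (h : LegendrePair u v) (hμ : 0 < μ) (hW : Differentiable ℝ W)
    (hWL : ∃ K, LipschitzWith K W) (hsum : ∀ x, gradVec u x + μ • gradVec v x = W x) :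
    Set.MapsTo (gradVec v) {x | DifferentiableAt ℝ (gradVec u) x}
      {x | DifferentiableAt ℝ (gradVec u) x} := fun _ hx =>
  let ⟨_, hK⟩ := h.exists_lipschitzWith_left hμ hWL hsum
  differentiableAt_of_rightInverse_of_lipschitzWith hK h.rightInverse h.leftInverse
    ((differentiableAt_gradVec_right_iff hμ (hW _) hsum).2 hx)

lemma trace_jacobian_left_nonneg (h : LegendrePair u v) (hx : DifferentiableAt ℝ (gradVec u) x) :
    0 ≤ (jacobian (gradVec u) x).trace :=
  (posSemidef_jacobian_gradVec h.differentiable_left h.bregmanDiv_left_nonneg hx).trace_nonneg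

lemma sq_le_trace_jacobian_mul_trace_jacobian (h : LegendrePair u v)
    (hx : DifferentiableAt ℝ (gradVec u) x) (hy : DifferentiableAt ℝ (gradVec v) (gradVec u x)) :
    (d : ℝ) ^ 2 ≤
      (jacobian (gradVec v) (gradVec u x)).trace * (jacobian (gradVec u) x).trace := by
  have := card_sq_le_trace_mul_trace
    (posSemidef_jacobian_gradVec h.differentiable_right h.bregmanDiv_right_nonneg hy)
    (jacobian_mul_jacobian_of_leftInverse h.leftInverse hy hx)
  rwa [Fintype.card_fin] at this

lemma two_mul_div_upperRoot_le_of_differentiableAt (h : LegendrePair u v) (hd : 0 < d)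
    (hμ : 0 < μ) (hW : ContDiff ℝ 1 W) (hWL : ∃ K, LipschitzWith K W)
    (hsum : ∀ x, gradVec u x + μ • gradVec v x = W x) {K : ℝ}
    (hK : ∀ x, (jacobian W x).trace / d ≤ K) (hx : DifferentiableAt ℝ (gradVec u) x) :
    0 < K ∧ 2 * μ / upperRoot K μ ≤ (jacobian W x).trace / d := by
  have hd' : (0 : ℝ) < d := Nat.cast_pos.2 hd
  have hWd := hW.differentiable one_ne_zero
  set E : Set (Fin d → ℝ) := {x | DifferentiableAt ℝ (gradVec u) x}
  have hv : ∀ x ∈ E, DifferentiableAt ℝ (gradVec v) x := fun x hx =>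
    (differentiableAt_gradVec_right_iff hμ (hWd x) hsum).2 hx
  have hmaps : Set.MapsTo (gradVec u) E E := h.mapsTo_gradVec_left hμ hWd hWL hsum
  have htrace : ∀ x ∈ E, (jacobian (gradVec u) x).trace / d +
      μ * (jacobian (gradVec v) x).trace / d = (jacobian W x).trace / d := fun x hx => by
    rw [← funext hsum, jacobian_add_const_smul hx (hv x hx), Matrix.trace_add,
      Matrix.trace_smul, smul_eq_mul, add_div]
  have hprod : ∀ x ∈ E, μ ≤ (jacobian (gradVec u) x).trace / d *
      (μ * (jacobian (gradVec v) (gradVec u x)).trace / d) := fun x hx => by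
    have := h.sq_le_trace_jacobian_mul_trace_jacobian hx (hv _ (hmaps hx))
    rw [div_mul_div_comm, le_div_iff₀ (mul_pos hd' hd')]
    linarith [mul_le_mul_of_nonneg_left this hμ.le]
  rw [← htrace x hx]
  exact two_mul_div_upperRoot_le_add_of_mapsTo
    (q := fun x => μ * (jacobian (gradVec v) x).trace / d) hμ hmaps
    (h.mapsTo_gradVec_right hμ hWd hWL hsum) h.rightInverse
    (fun x hx => div_nonneg (h.trace_jacobian_left_nonneg hx) hd'.le)
    (fun x hx => (htrace x hx).trans_le (hK x)) hprod hx

lemma two_mul_div_upperRoot_le (h : LegendrePair u v) (hd : 0 < d) (hμ : 0 < μ)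
    (hW : ContDiff ℝ 1 W) (hWL : ∃ K, LipschitzWith K W)
    (hsum : ∀ x, gradVec u x + μ • gradVec v x = W x) {K : ℝ}
    (hK : ∀ x, (jacobian W x).trace / d ≤ K) (x : Fin d → ℝ) :
    0 < K ∧ 2 * μ / upperRoot K μ ≤ (jacobian W x).trace / d := by
  obtain ⟨C, hC⟩ := h.exists_lipschitzWith_left hμ hWL hsum
  have hdense : Dense {x | DifferentiableAt ℝ (gradVec u) x} :=
    MeasureTheory.Measure.dense_of_ae (hC.ae_differentiableAt (μ := MeasureTheory.volume))
  have hclosed : IsClosed {x | 2 * μ / upperRoot K μ ≤ (jacobian W x).trace / d} :=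
    isClosed_le continuous_const ((continuous_trace_jacobian hW).div_const _)
  have hbound := fun x hx =>
    h.two_mul_div_upperRoot_le_of_differentiableAt hd hμ hW hWL hsum hK (x := x) hx
  obtain ⟨x₀, hx₀⟩ := hdense.nonempty
  exact ⟨(hbound x₀ hx₀).1, hclosed.closure_subset_iff.2 (fun x hx => (hbound x hx).2) (hdense x)⟩

end LegendrePair

end LegendrePair

section InvariantGraph

lemma leftInverse_and_rightInverse_of_image_graph_eq {R V : Type*} [CommRing R] [AddCommGroup V]
    [Module R V] {r : R} {b : V} {Ψ D : V → V}
    (hinv : (fun p : V × V => (p.1 + r • (b + p.2 + D p.1), r • (p.2 + D p.1))) ''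
      {p | p.2 = Ψ p.1} = {p | p.2 = Ψ p.1}) :
    Function.LeftInverse (fun x => x - Ψ x - r • b) (fun x => x + r • (b + Ψ x + D x)) ∧
      Function.RightInverse (fun x => x - Ψ x - r • b) (fun x => x + r • (b + Ψ x + D x)) := by
  have hΨ : ∀ x, r • (Ψ x + D x) = Ψ (x + r • (b + Ψ x + D x)) := fun x =>
    hinv.subset ⟨(x, Ψ x), rfl, rfl⟩
  have hleft : Function.LeftInverse (fun x => x - Ψ x - r • b)
      (fun x => x + r • (b + Ψ x + D x)) := fun x => by
    simp only [← hΨ]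
    module
  refine ⟨hleft, hleft.rightInverse_of_surjective fun z => ?_⟩
  obtain ⟨⟨x, _⟩, hx, hz⟩ := hinv.superset (rfl : (z, Ψ z).2 = Ψ z)
  obtain rfl : _ = Ψ x := hx
  exact ⟨x, congrArg Prod.fst hz⟩

variable {d : ℕ} {lam : ℝ} {β : Fin d → ℝ} {Φ : (Fin d → ℝ) → ℝ}

lemma exists_legendrePair_of_hasInvLagGraph (hΦ : Differentiable ℝ Φ) (hper : LatticePeriodic Φ)
    (hinv : HasInvLagGraph (fun p : (Fin d → ℝ) × (Fin d → ℝ) =>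
      (p.1 + lam • (β + p.2 + gradVec Φ p.1), lam • (p.2 + gradVec Φ p.1)))) :
    ∃ u v, LegendrePair u v ∧ ∀ x, gradVec u x + lam • gradVec v x =
      ((1 + lam) • x + (lam * (1 - lam)) • β) + lam • gradVec Φ x := by
  obtain ⟨c, η, hη, hηper, hF⟩ := hinv
  have hηd := hη.differentiable one_ne_zero
  have hu : Differentiable ℝ fun x => lam * (η x + Φ x) := (hηd.fun_add hΦ).const_mul lam
  have hv : Differentiable ℝ fun x => -η x := hηd.fun_neg
  have hgradu : gradVec (potential (lam • (β + c)) fun x => lam * (η x + Φ x)) =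
      fun x => x + lam • (β + (c + gradVec η x) + gradVec Φ x) := funext fun x => by
    rw [gradVec_potential hu, gradVec_const_mul_add hηd hΦ]
    module
  have hgradv : gradVec (potential (-(c + lam • β)) fun x => -η x) =
      fun x => x - (c + gradVec η x) - lam • β := funext fun x => by
    rw [gradVec_potential hv, gradVec_neg]
    module
  obtain ⟨hleft, hright⟩ :=
    leftInverse_and_rightInverse_of_image_graph_eq (Ψ := fun x => c + gradVec η x) hF
  rw [← hgradu, ← hgradv] at hleft hright
  refine ⟨_, _, legendrePair_potential hu hv (fun x n => by simp only [hηper x n, hper x n])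
    (fun x n => by simp only [hηper x n]) hleft hright, fun x => ?_⟩
  rw [hgradu, hgradv]
  module

lemma trace_jacobian_smul_self_add_const_add_smul_gradVec {r s : ℝ} {b x : Fin d → ℝ}
    (hd : 0 < d) (hΦ : DifferentiableAt ℝ (gradVec Φ) x) :
    (jacobian (fun y => (r • y + b) + s • gradVec Φ y) x).trace / d =
      r + s * (1 / d * ∑ i, secondPartial Φ x i i) := by
  have hd' : (d : ℝ) ≠ 0 := Nat.cast_ne_zero.2 hd.ne'
  rw [jacobian_add_const_smul (by fun_prop) hΦ, jacobian_smul_self_add_const, Matrix.trace_add,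
    Matrix.trace_smul, Matrix.trace_smul, Matrix.trace_one, trace_jacobian_gradVec hΦ,
    Fintype.card_fin, smul_eq_mul, smul_eq_mul]
  field_simp

lemma latticePeriodic_sum_secondPartial (hΦ : ContDiff ℝ 2 Φ) (hper : LatticePeriodic Φ) :
    LatticePeriodic fun x => ∑ i, secondPartial Φ x i i := fun x n => by
  have hd := (contDiff_gradVec (m := 1) hΦ one_add_one_eq_two.le).differentiable one_ne_zero
  simp only [← trace_jacobian_gradVec (hd _), jacobian,
    (latticePeriodic_gradVec hper).fderiv x n]

lemma two_mul_div_upperRoot_le_of_hasInvLagGraph (hd : 0 < d) (hlam : 0 < lam)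
    (hΦ : ContDiff ℝ 2 Φ) (hper : LatticePeriodic Φ) {M : ℝ}
    (hM : ∀ x, 1 / d * ∑ i, secondPartial Φ x i i ≤ M)
    (hinv : HasInvLagGraph (fun p : (Fin d → ℝ) × (Fin d → ℝ) =>
      (p.1 + lam • (β + p.2 + gradVec Φ p.1), lam • (p.2 + gradVec Φ p.1)))) (x : Fin d → ℝ) :
    0 < 1 + lam + lam * M ∧ 2 * lam / upperRoot (1 + lam + lam * M) lam ≤
      1 + lam + lam * (1 / d * ∑ i, secondPartial Φ x i i) := by
  have hDΦ : ContDiff ℝ 1 (gradVec Φ) := contDiff_gradVec hΦ one_add_one_eq_two.le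
  have hDΦd := hDΦ.differentiable one_ne_zero
  obtain ⟨K, hK⟩ := (latticePeriodic_gradVec hper).exists_lipschitzWith hDΦ
  obtain ⟨u, v, huv, hsum⟩ :=
    exists_legendrePair_of_hasInvLagGraph (hΦ.differentiable two_ne_zero) hper hinv
  have hlip : ∃ C, LipschitzWith C
      fun y => ((1 + lam) • y + (lam * (1 - lam)) • β) + lam • gradVec Φ y :=
    ⟨_, ((lipschitzWith_smul (1 + lam)).add (.const _)).add ((lipschitzWith_smul lam).comp hK)⟩
  rw [← trace_jacobian_smul_self_add_const_add_smul_gradVec (b := (lam * (1 - lam)) • β) hd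
    (hDΦd x)]
  refine huv.two_mul_div_upperRoot_le hd hlam (by fun_prop) hlip hsum (fun y => ?_) x
  rw [trace_jacobian_smul_self_add_const_add_smul_gradVec hd (hDΦd y)]
  gcongr
  exact hM y

end InvariantGraph

section Bound

variable {lam : ℝ}

lemma inv_one_add_le_mul_upperRoot {K t : ℝ} (hlam : 0 < lam) (hK : 0 < K)
    (h : 2 * lam / upperRoot K lam ≤ 1 + lam + lam * t) :
    (1 + lam * t / (1 + lam))⁻¹ ≤ (1 + lam) / (2 * lam) * upperRoot K lam := by
  have hroot := upperRoot_pos hK lam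
  calc (1 + lam * t / (1 + lam))⁻¹ = ((1 + lam + lam * t) / (1 + lam))⁻¹ := by
        rw [add_div, div_self (by positivity)]
    _ ≤ (2 * lam / upperRoot K lam / (1 + lam))⁻¹ := by gcongr
    _ = (1 + lam) / (2 * lam) * upperRoot K lam := by
        rw [inv_div, div_div_eq_mul_div, mul_div_right_comm]

lemma mul_upperRoot_le_max (hlam : 0 < lam) (M : ℝ) :
    (1 + lam) / (2 * lam) * upperRoot (1 + lam + lam * M) lam ≤
      max ((1 + lam) / 2 + lam * M / 2 +
            Real.sqrt ((1 - lam) ^ 2 / 4 + lam ^ 2 * M ^ 2 / 4 + (1 + lam) * lam * M / 2))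
        ((1 / (2 * lam)) *
          (1 + lam + lam * M + Real.sqrt ((1 + lam + lam * M) ^ 2 - 4 * lam))) := by
  set Λ := upperRoot (1 + lam + lam * M) lam with hΛ
  have hfirst : (1 + lam) / 2 + lam * M / 2 +
      √((1 - lam) ^ 2 / 4 + lam ^ 2 * M ^ 2 / 4 + (1 + lam) * lam * M / 2) = Λ := by
    rw [show (1 - lam) ^ 2 / 4 + lam ^ 2 * M ^ 2 / 4 + (1 + lam) * lam * M / 2 =
      ((1 + lam + lam * M) ^ 2 - 4 * lam) / 2 ^ 2 by ring, sqrt_div' _ (sq_nonneg 2),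
      sqrt_sq zero_le_two, hΛ, upperRoot]
    ring
  have hsecond : 1 / (2 * lam) * (1 + lam + lam * M + √((1 + lam + lam * M) ^ 2 - 4 * lam)) =
      Λ / lam := by
    rw [hΛ, upperRoot]
    field_simp
  have haverage : (1 + lam) / (2 * lam) * Λ = (Λ + Λ / lam) / 2 := by
    field_simp
    ring
  rw [hfirst, hsecond, haverage]
  linarith [le_max_left Λ (Λ / lam), le_max_right Λ (Λ / lam)]

end Bound

theorem criterion_dimd_general (d : ℕ) (hd : 1 ≤ d) (lam : ℝ) (hlam : 0 < lam)
    (β : Fin d → ℝ) (Φ : (Fin d → ℝ) → ℝ) (hΦ : ContDiff ℝ 2 Φ) (hΦper : ZdPeriodic Φ)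
    (T : (Fin d → ℝ) → ℝ) (hT : ∀ x, T x = (1 / (d : ℝ)) * ∑ i, secondPartial Φ x i i)
    (M : ℝ) (hM : ∀ x ∈ Set.Icc (0 : Fin d → ℝ) 1, T x ≤ M)
    (hinv : HasInvLagGraph (fun p : (Fin d → ℝ) × (Fin d → ℝ) =>
      (p.1 + lam • (β + p.2 + gradVec Φ p.1), lam • (p.2 + gradVec Φ p.1)))) (x : Fin d → ℝ) :
    -(1 + lam) / lam < T x ∧ (1 + lam * T x / (1 + lam))⁻¹ ≤
      (1 + lam) / (2 * lam) * upperRoot (1 + lam + lam * M) lam := by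
  obtain rfl : T = _ := funext hT
  have hM' : ∀ y, 1 / d * ∑ i, secondPartial Φ y i i ≤ M := fun y => by
    obtain ⟨z, hz, hzy⟩ := (latticePeriodic_sum_secondPartial hΦ hΦper).exists_mem_Icc_eq y
    exact hzy ▸ hM z hz
  obtain ⟨hpos, hbound⟩ := two_mul_div_upperRoot_le_of_hasInvLagGraph hd hlam hΦ hΦper hM' hinv x
  refine ⟨(div_lt_iff₀ hlam).2 ?_, inv_one_add_le_mul_upperRoot hlam hpos hbound⟩
  linarith [(div_pos (mul_pos two_pos hlam) (upperRoot_pos hpos lam)).trans_le hbound]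

theorem criterion_dimd (d : ℕ) (hd : 1 ≤ d) (lam : ℝ) (hlam : lam ∈ Set.Ioo (0 : ℝ) 1)
    (β : Fin d → ℝ) (Φ : (Fin d → ℝ) → ℝ) (hΦ : ContDiff ℝ 2 Φ) (hΦper : ZdPeriodic Φ)
    (T : (Fin d → ℝ) → ℝ) (hT : ∀ x, T x = (1 / (d : ℝ)) * ∑ i, secondPartial Φ x i i)
    (M m : ℝ)
    -- M = max_{[0,1]^d} T and m = min_{[0,1]^d} T
    (hM₁ : ∀ x ∈ Set.Icc (0 : Fin d → ℝ) 1, T x ≤ M)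
    (hM₂ : ∃ x ∈ Set.Icc (0 : Fin d → ℝ) 1, T x = M)
    (hm₁ : ∀ x ∈ Set.Icc (0 : Fin d → ℝ) 1, m ≤ T x)
    (hm₂ : ∃ x ∈ Set.Icc (0 : Fin d → ℝ) 1, T x = m)
    (hinv : HasInvLagGraph (fun p : (Fin d → ℝ) × (Fin d → ℝ) =>
      (p.1 + lam • (β + p.2 + gradVec Φ p.1), lam • (p.2 + gradVec Φ p.1)))) :
    -(1 + lam) / lam < m ∧
      (1 + lam * m / (1 + lam))⁻¹ ≤
        max ((1 + lam) / 2 + lam * M / 2 +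
              Real.sqrt ((1 - lam) ^ 2 / 4 + lam ^ 2 * M ^ 2 / 4 + (1 + lam) * lam * M / 2))
          ((1 / (2 * lam)) *
            (1 + lam + lam * M + Real.sqrt ((1 + lam + lam * M) ^ 2 - 4 * lam))) := by
  obtain ⟨x, -, rfl⟩ := hm₂
  exact (criterion_dimd_general d hd lam hlam.1 β Φ hΦ hΦper T hT M hM₁ hinv x).imp_right
    (·.trans (mul_upperRoot_le_max hlam.1 M))
end
end
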